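/- arXiv:2203.01328 — 8 statements merged into one kernel-verified Lean document; each statement's English description precedes it below -/
import Mathlib

section
/- Let N > 2 be an integer, Ω ⊂ ℝ^N a nonempty bounded open set, Σ ⊂ Ω a nonempty compact set, and α ≤ N − 2 a real number. For x, y in the closure of Ω with x ≠ y set 𝒩_α(x,y) = max{|x−y|, d_Σ(x), d_Σ(y)}^α / ( |x−y|^{N−2} · max{|x−y|, d(x), d(y)}^2 ). Then there exists a constant C = C(N, Ω, Σ, α) > 0 such that for all pairwise distinct points x, y, z in the closure of Ω one has 1/𝒩_α(x,y) ≤ C ( 1/𝒩_α(x,z) + 1/𝒩_α(z,y) ); that is, the reciprocal of 𝒩_α satisfies a quasi-metric inequality. -/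
open MeasureTheory Metric Set

/-- The kernel `𝒩_α(x,y)` from the paper. -/
noncomputable def NKer (N : ℕ) (Ω S : Set (EuclideanSpace ℝ (Fin N))) (α : ℝ)
    (x y : EuclideanSpace ℝ (Fin N)) : ℝ :=
  (max (dist x y) (max (infDist x S) (infDist y S))) ^ α /
    ((dist x y) ^ ((N : ℝ) - 2) *
      (max (dist x y) (max (infDist x (frontier Ω)) (infDist y (frontier Ω)))) ^ (2 : ℝ))

lemma aux_core (n α : ℝ) (hn : 0 ≤ n) (hα : α ≤ n) :
    ∃ C : ℝ, 0 < C ∧ ∀ r s D D' E E' : ℝ, 0 < r → 0 < s → 0 < D → 0 < D' → 0 < E → 0 < E' →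
      r ≤ 2 * s → D ≤ 2 * D' → E ≤ 2 * E' → r * E' ≤ 3 * (s * E) →
      r ^ n * D ^ (2 : ℝ) / E ^ α ≤ C * (s ^ n * D' ^ (2 : ℝ) / E' ^ α) := by
  suffices h : ∃ C : ℝ, 0 < C ∧ ∀ r s E E' : ℝ, 0 < r → 0 < s → 0 < E → 0 < E' →
      r ≤ 2 * s → E ≤ 2 * E' → r * E' ≤ 3 * (s * E) →
      r ^ n / E ^ α ≤ C * (s ^ n / E' ^ α) by
    obtain ⟨C, hC, h⟩ := h
    refine ⟨C * 2 ^ (2 : ℝ), by positivity, ?_⟩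
    intro r s D D' E E' hr hs hD hD' hE hE' h1 h2 h3 h4
    have a := h r s E E' hr hs hE hE' h1 h3 h4
    have b : D ^ (2 : ℝ) ≤ 2 ^ (2 : ℝ) * D' ^ (2 : ℝ) := by
      rw [← Real.mul_rpow (by norm_num) hD'.le]
      exact Real.rpow_le_rpow hD.le h2 (by norm_num)
    calc r ^ n * D ^ (2 : ℝ) / E ^ α = (r ^ n / E ^ α) * D ^ (2 : ℝ) := by ring
      _ ≤ (C * (s ^ n / E' ^ α)) * (2 ^ (2 : ℝ) * D' ^ (2 : ℝ)) := by gcongr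
      _ = _ := by ring
  rcases le_total α 0 with h0 | h0
  · refine ⟨2 ^ n * 2 ^ (-α), by positivity, ?_⟩
    intro r s E E' hr hs hE hE' h1 h3 _
    rw [div_eq_mul_inv, div_eq_mul_inv, ← Real.rpow_neg hE.le, ← Real.rpow_neg hE'.le]
    have a : r ^ n ≤ 2 ^ n * s ^ n := by
      rw [← Real.mul_rpow (by norm_num) hs.le]
      exact Real.rpow_le_rpow hr.le h1 hn
    have b : E ^ (-α) ≤ 2 ^ (-α) * E' ^ (-α) := by
      rw [← Real.mul_rpow (by norm_num) hE'.le]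
      exact Real.rpow_le_rpow hE.le h3 (by linarith)
    calc r ^ n * E ^ (-α) ≤ (2 ^ n * s ^ n) * (2 ^ (-α) * E' ^ (-α)) := by gcongr
      _ = _ := by ring
  · refine ⟨2 ^ (n - α) * 3 ^ α, by positivity, ?_⟩
    intro r s E E' hr hs hE hE' h1 _ h4
    have key : ∀ r E : ℝ, 0 < r → 0 < E → r ^ n / E ^ α = r ^ (n - α) * (r / E) ^ α := by
      intro r E hr hE
      rw [Real.div_rpow hr.le hE.le, ← mul_div_assoc, ← Real.rpow_add hr]
      ring_nf
    rw [key r E hr hE, key s E' hs hE']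
    have a : r ^ (n - α) ≤ 2 ^ (n - α) * s ^ (n - α) := by
      rw [← Real.mul_rpow (by norm_num) hs.le]
      exact Real.rpow_le_rpow hr.le h1 (by linarith)
    have b : (r / E) ^ α ≤ 3 ^ α * (s / E') ^ α := by
      rw [← Real.mul_rpow (by norm_num) (by positivity)]
      refine Real.rpow_le_rpow (by positivity) ?_ h0
      rw [← mul_div_assoc, div_le_div_iff₀ hE hE']
      linarith
    calc r ^ (n - α) * (r / E) ^ α
        ≤ (2 ^ (n - α) * s ^ (n - α)) * (3 ^ α * (s / E') ^ α) := by gcongr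
      _ = _ := by ring

lemma NKer_symm (N : ℕ) (Ω S : Set (EuclideanSpace ℝ (Fin N))) (α : ℝ)
    (x y : EuclideanSpace ℝ (Fin N)) : NKer N Ω S α x y = NKer N Ω S α y x := by
  unfold NKer
  rw [dist_comm x y, max_comm (infDist x S), max_comm (infDist x (frontier Ω))]

lemma NKer_nonneg (N : ℕ) (Ω S : Set (EuclideanSpace ℝ (Fin N))) (α : ℝ)
    (x y : EuclideanSpace ℝ (Fin N)) : 0 ≤ NKer N Ω S α x y := by
  have h : ∀ a : ℝ, 0 ≤ max (dist x y) a := fun a => le_max_of_le_left dist_nonneg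
  unfold NKer
  exact div_nonneg (Real.rpow_nonneg (h _) _)
    (mul_nonneg (Real.rpow_nonneg dist_nonneg _) (Real.rpow_nonneg (h _) _))

/-- The reciprocal of `𝒩_α` satisfies a quasi-metric inequality. -/
theorem quasi_metric_NKer (N : ℕ) (hN : 2 < N) (Ω S : Set (EuclideanSpace ℝ (Fin N)))
    (hΩo : IsOpen Ω) (hΩb : Bornology.IsBounded Ω) (hΩne : Ω.Nonempty)
    (hS : IsCompact S) (hSne : S.Nonempty) (hSΩ : S ⊆ Ω)
    (α : ℝ) (hα : α ≤ (N : ℝ) - 2) :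
    ∃ C : ℝ, 0 < C ∧ ∀ x ∈ closure Ω, ∀ y ∈ closure Ω, ∀ z ∈ closure Ω,
      x ≠ y → x ≠ z → y ≠ z →
      1 / NKer N Ω S α x y ≤ C * (1 / NKer N Ω S α x z + 1 / NKer N Ω S α z y) := by
  have hn : (0 : ℝ) ≤ (N : ℝ) - 2 := by
    have : (2 : ℝ) < N := by exact_mod_cast hN
    linarith
  obtain ⟨C, hC, h⟩ := aux_core ((N : ℝ) - 2) α hn hα
  have main : ∀ x y z : EuclideanSpace ℝ (Fin N), x ≠ y → x ≠ z → dist z y ≤ dist x z →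
      1 / NKer N Ω S α x y ≤ C * (1 / NKer N Ω S α x z) := by
    intro x y z hxy hxz hst
    have hr : 0 < dist x y := dist_pos.2 hxy
    have hs : 0 < dist x z := dist_pos.2 hxz
    have htri := dist_triangle x z y
    have hE : ∀ T : Set (EuclideanSpace ℝ (Fin N)),
        max (dist x y) (max (infDist x T) (infDist y T)) ≤
          2 * max (dist x z) (max (infDist x T) (infDist z T)) := by
      intro T
      have h1 := le_max_left (dist x z) (max (infDist x T) (infDist z T))
      have h2 := (le_max_left (infDist x T) (infDist z T)).trans (le_max_right (dist x z) _)
      have h3 := (le_max_right (infDist x T) (infDist z T)).trans (le_max_right (dist x z) _)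
      have h4 : infDist y T ≤ infDist z T + dist y z := infDist_le_infDist_add_dist
      rw [dist_comm] at h4
      refine max_le ?_ (max_le ?_ ?_) <;> linarith
    unfold NKer
    rw [one_div_div, one_div_div]
    refine h _ _ _ _ _ _ hr hs (lt_max_of_lt_left hr) (lt_max_of_lt_left hs)
      (lt_max_of_lt_left hr) (lt_max_of_lt_left hs) (by linarith) (hE _) (hE _) ?_
    have e1 := le_max_left (dist x y) (max (infDist x S) (infDist y S))
    have e2 := (le_max_left (infDist x S) (infDist y S)).trans (le_max_right (dist x y) _)
    set E := max (dist x y) (max (infDist x S) (infDist y S))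
    have e3 : max (dist x z) (max (infDist x S) (infDist z S)) ≤ dist x z + E := by
      have h4 : infDist z S ≤ infDist x S + dist z x := infDist_le_infDist_add_dist
      rw [dist_comm] at h4
      refine max_le ?_ (max_le ?_ ?_) <;> linarith
    have f1 := mul_le_mul_of_nonneg_left e3 hr.le
    have f2 := mul_le_mul_of_nonneg_right e1 hs.le
    have f3 : dist x y * E ≤ 2 * dist x z * E :=
      mul_le_mul_of_nonneg_right (by linarith) (by linarith)
    linarith
  refine ⟨C, hC, fun x _ y _ z _ hxy hxz hyz => ?_⟩
  have n1 : 0 ≤ C * (1 / NKer N Ω S α x z) :=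
    mul_nonneg hC.le (one_div_nonneg.2 (NKer_nonneg ..))
  have n2 : 0 ≤ C * (1 / NKer N Ω S α z y) :=
    mul_nonneg hC.le (one_div_nonneg.2 (NKer_nonneg ..))
  rw [mul_add]
  rcases le_total (dist z y) (dist x z) with hh | hh
  · linarith [main x y z hxy hxz hh]
  · have := main y x z hxy.symm hyz (by rwa [dist_comm z x, dist_comm y z])
    rw [NKer_symm N Ω S α y x, NKer_symm N Ω S α y z] at this
    linarith
end

section
/- Let N > 2 be an integer, Ω ⊂ ℝ^N a nonempty bounded open set with 0 ∈ Ω, let 0 < α ≤ (N−2)/2 and 0 ≤ γ ≤ 1. Set p = min{ (N−α)/(N−2−α), (N+γ)/(N−2+γ−2α) }, where the second quantity is interpreted as +∞ if N−2+γ−2α = 0. Then there exists C = C(N, Ω, α, γ) > 0 such that for every finite positive Borel measure ω on Ω ∖ {0} and every λ > 0: ∫_{{x ∈ Ω∖{0} : U(x) > λ}} d(x)|x|^{−α} dx ≤ C λ^{−p} ω(Ω∖{0})^p, where U(x) = ∫_{Ω∖{0}} |x|^{−α} |x−y|^{−N+2+2α} d(y)^{−γ} · min{1, d(x)d(y)/|x−y|^2}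 dω(y). -/
open MeasureTheory Metric Set

/-- The exponent `p = min{(N−α)/(N−2−α), (N+γ)/(N−2+γ−2α)}`, where the second
quantity is interpreted as `+∞` (i.e. dropped from the minimum) if `N−2+γ−2α = 0`. -/
noncomputable def pExp (N : ℕ) (α γ : ℝ) : ℝ :=
  if (N : ℝ) - 2 + γ - 2 * α = 0 then ((N : ℝ) - α) / ((N : ℝ) - 2 - α)
  else min (((N : ℝ) - α) / ((N : ℝ) - 2 - α)) (((N : ℝ) + γ) / ((N : ℝ) - 2 + γ - 2 * α))


lemma ker_aux {γ m b s : ℝ} (hγ0 : 0 ≤ γ) (hγ1 : γ ≤ 1) (hm0 : 0 ≤ m) (hm1 : m ≤ 1)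
    (hb : 0 < b) (hs : 0 < s) (h : m ≤ 4 * (b / s)) : b ^ (-γ) * m ≤ 4 * s ^ (-γ) := by
  rcases hm0.eq_or_lt with rfl | hm
  · rw [mul_zero]; positivity
  have h1 : m ≤ m ^ γ := by
    simpa using Real.rpow_le_rpow_of_exponent_ge hm hm1 hγ1
  have h2 : m ^ γ ≤ (4 * (b / s)) ^ γ := Real.rpow_le_rpow hm0 h hγ0
  have h3 : (4 * (b / s)) ^ γ = 4 ^ γ * (b ^ γ * s ^ (-γ)) := by
    rw [Real.mul_rpow (by norm_num) (by positivity), Real.div_rpow hb.le hs.le, Real.rpow_neg hs.le]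
    rfl
  have h4 : (4:ℝ) ^ γ ≤ 4 := by
    simpa using Real.rpow_le_rpow_of_exponent_le (by norm_num : (1:ℝ) ≤ 4) hγ1
  have h5 : b ^ (-γ) * b ^ γ = 1 := by
    rw [← Real.rpow_add hb]; simp
  calc b ^ (-γ) * m ≤ b ^ (-γ) * (4 ^ γ * (b ^ γ * s ^ (-γ))) := by
        rw [← h3]; gcongr; exact h1.trans h2
    _ = 4 ^ γ * ((b ^ (-γ) * b ^ γ) * s ^ (-γ)) := by ring
    _ ≤ 4 * s ^ (-γ) := by rw [h5, one_mul]; gcongr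

lemma min_le_a {a b r : ℝ} (ha : 0 < a) (hb : 0 < b) (hr : 0 < r) (hab : a ≤ b + r) :
    min 1 (a * b / r ^ 2) ≤ 4 * (b / a) := by
  by_cases h : a ≤ 2 * b
  · refine (min_le_left _ _).trans ?_
    rw [← mul_div_assoc, le_div_iff₀ ha]; linarith
  · refine (min_le_right _ _).trans ?_
    rw [← mul_div_assoc, div_le_div_iff₀ (by positivity) ha]
    have : a ≤ 2 * r := by linarith
    have : a * a ≤ 4 * r ^ 2 := by nlinarith
    nlinarith

lemma min_le_r {a b r : ℝ} (_ha : 0 < a) (hb : 0 < b) (hr : 0 < r) (hab : a ≤ b + r) :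
    min 1 (a * b / r ^ 2) ≤ 4 * (b / r) := by
  by_cases h : r ≤ b
  · refine (min_le_left _ _).trans ?_
    rw [← mul_div_assoc, le_div_iff₀ hr]; linarith
  · refine (min_le_right _ _).trans ?_
    rw [← mul_div_assoc, div_le_div_iff₀ (by positivity) hr]
    have : a ≤ 2 * r := by linarith
    nlinarith [mul_pos hb hr, mul_pos (mul_pos hb hr) hr]

lemma pointwise {α γ M β n2 δ D C R1 R2 X r a b : ℝ} (hα0 : 0 < α) (hγ0 : 0 ≤ γ) (hγ1 : γ ≤ 1)
    (hM : 0 ≤ M) (hβ : β = α + M) (hn2 : n2 = α + β) (hδ : 0 < δ) (hD : 1 ≤ D)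
    (hC1 : 4 * δ ^ (-γ) * D ≤ C) (hC2 : 4 * δ ^ (-α) ≤ C) (hC3 : 4 * (δ ^ (-α) * δ ^ (-α)) * D ≤ C)
    (hR1 : 0 < R1) (hR2 : 0 < R2) (hX : 0 < X) (hr : 0 ≤ r) (ha : 0 < a) (hb : 0 < b)
    (hab : a ≤ b + r) (haD : a ≤ D) (hXa : X < δ → δ ≤ a) :
    (X ^ (-α) * r ^ (-M) * b ^ (-γ) * min 1 (a * b / r ^ 2)) * (a * X ^ (-α)) ≤
      C * ((R1 ^ (-β) + R2 ^ (-(M + γ))) * (a * X ^ (-α)) + (if X < R1 then X ^ (-n2) else 0)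
        + (if r < R1 then r ^ (-n2) else 0) + (if r < R2 then r ^ (-M) else 0)) := by
  have hC : 0 < C := lt_of_lt_of_le (by positivity) hC2
  have i1 : 0 ≤ (if X < R1 then X ^ (-n2) else 0) := by split_ifs <;> positivity
  have i2 : 0 ≤ (if r < R1 then r ^ (-n2) else 0) := by split_ifs <;> positivity
  have i3 : 0 ≤ (if r < R2 then r ^ (-M) else 0) := by split_ifs <;> positivity
  have w0 : 0 < a * X ^ (-α) := by positivity
  rcases hr.eq_or_lt with h0 | hr0
  · subst h0
    have : min 1 (a * b / (0:ℝ) ^ 2) = 0 := by simp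
    rw [this]
    simp only [mul_zero, zero_mul]
    positivity
  have hm0 : 0 ≤ min 1 (a * b / r ^ 2) := by positivity
  have hm1 : min 1 (a * b / r ^ 2) ≤ 1 := min_le_left _ _
  have ka := ker_aux hγ0 hγ1 hm0 hm1 hb ha (min_le_a ha hb hr0 hab)
  have kr := ker_aux hγ0 hγ1 hm0 hm1 hb hr0 (min_le_r ha hb hr0 hab)
  set Q := b ^ (-γ) * min 1 (a * b / r ^ 2) with hQ
  have hK : X ^ (-α) * r ^ (-M) * b ^ (-γ) * min 1 (a * b / r ^ 2) = X ^ (-α) * r ^ (-M) * Q := by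
    rw [hQ]; ring
  rw [hK]
  have e1 : 0 ≤ R1 ^ (-β) * (a * X ^ (-α)) := by positivity
  have e2 : 0 ≤ R2 ^ (-(M + γ)) * (a * X ^ (-α)) := by positivity
  by_cases hXδ : X < δ
  · have haδ := hXa hXδ
    have k1 : Q ≤ 4 * δ ^ (-γ) :=
      ka.trans (by gcongr 4 * ?_; exact Real.rpow_le_rpow_of_nonpos hδ haδ (by linarith))
    have hs : 0 < min X r := lt_min hX hr0
    have k2 : X ^ (-α) * r ^ (-M) ≤ (min X r) ^ (-β) := by
      rw [hβ, neg_add, Real.rpow_add hs]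
      gcongr ?_ * ?_
      · exact Real.rpow_le_rpow_of_nonpos hs (min_le_left _ _) (by linarith)
      · exact Real.rpow_le_rpow_of_nonpos hs (min_le_right _ _) (by linarith)
    by_cases hsR : R1 ≤ min X r
    · have k3 : (min X r) ^ (-β) ≤ R1 ^ (-β) :=
        Real.rpow_le_rpow_of_nonpos hR1 hsR (by linarith)
      calc X ^ (-α) * r ^ (-M) * Q * (a * X ^ (-α))
          ≤ R1 ^ (-β) * (4 * δ ^ (-γ) * D) * (a * X ^ (-α)) := by
            gcongr
            · exact k2.trans k3
            · refine k1.trans (le_mul_of_one_le_right (by positivity) hD)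
        _ ≤ R1 ^ (-β) * C * (a * X ^ (-α)) := by gcongr
        _ = C * (R1 ^ (-β) * (a * X ^ (-α))) := by ring
        _ ≤ _ := by gcongr; linarith
    · have k4 : (min X r) ^ (-n2) ≤ (if X < R1 then X ^ (-n2) else 0)
        + (if r < R1 then r ^ (-n2) else 0) := by
        push Not at hsR
        rcases le_total X r with h | h
        · rw [min_eq_left h] at hsR ⊢
          rw [if_pos hsR]; linarith
        · rw [min_eq_right h] at hsR ⊢
          rw [if_pos hsR]; linarith
      have k5 : X ^ (-α) ≤ (min X r) ^ (-α) :=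
        Real.rpow_le_rpow_of_nonpos hs (min_le_left _ _) (by linarith)
      calc X ^ (-α) * r ^ (-M) * Q * (a * X ^ (-α))
          ≤ (min X r) ^ (-β) * (4 * δ ^ (-γ)) * (D * (min X r) ^ (-α)) := by gcongr
        _ = (4 * δ ^ (-γ) * D) * (min X r) ^ (-n2) := by
            rw [hn2, neg_add, Real.rpow_add hs]; ring
        _ ≤ C * (min X r) ^ (-n2) := by gcongr
        _ ≤ _ := by gcongr; linarith
  · push Not at hXδ
    have kX : X ^ (-α) ≤ δ ^ (-α) := Real.rpow_le_rpow_of_nonpos hδ hXδ (by linarith)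
    by_cases hrR : r < R2
    · rw [if_pos hrR]
      have k6 : Q * a ≤ 4 * D := by
        calc Q * a ≤ 4 * a ^ (-γ) * a := by gcongr
          _ = 4 * a ^ (1 - γ) := by
            rw [mul_assoc]; nth_rewrite 2 [← Real.rpow_one a]
            rw [← Real.rpow_add ha]; ring_nf
          _ ≤ 4 * D ^ (1 - γ) := by gcongr
          _ ≤ 4 * D := by
            gcongr; simpa using Real.rpow_le_rpow_of_exponent_le hD (by linarith : 1 - γ ≤ 1)
      have : 0 ≤ r ^ (-M) := by positivity
      calc X ^ (-α) * r ^ (-M) * Q * (a * X ^ (-α))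
          = X ^ (-α) * X ^ (-α) * (Q * a) * r ^ (-M) := by ring
        _ ≤ δ ^ (-α) * δ ^ (-α) * (4 * D) * r ^ (-M) := by gcongr
        _ = (4 * (δ ^ (-α) * δ ^ (-α)) * D) * r ^ (-M) := by ring
        _ ≤ C * r ^ (-M) := by gcongr
        _ ≤ _ := by gcongr; linarith
    · push Not at hrR
      calc X ^ (-α) * r ^ (-M) * Q * (a * X ^ (-α))
          ≤ δ ^ (-α) * r ^ (-M) * (4 * r ^ (-γ)) * (a * X ^ (-α)) := by gcongr
        _ = (4 * δ ^ (-α)) * r ^ (-(M + γ)) * (a * X ^ (-α)) := by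
            rw [neg_add, Real.rpow_add hr0]; ring
        _ ≤ C * R2 ^ (-(M + γ)) * (a * X ^ (-α)) := by
            gcongr ?_ * ?_ * _
            exact Real.rpow_le_rpow_of_nonpos hR2 hrR (by linarith)
        _ = C * (R2 ^ (-(M + γ)) * (a * X ^ (-α))) := by ring
        _ ≤ _ := by gcongr; linarith

lemma ball_int (N : ℕ) (hN : 2 < N) (s : ℝ) (hs0 : 0 ≤ s) (hs : s < N) :
    ∃ c : ℝ, 0 < c ∧ ∀ (y : EuclideanSpace ℝ (Fin N)) (R : ℝ), 0 < R →
      ∫⁻ x, ENNReal.ofReal (if dist x y < R then dist x y ^ (-s) else 0) ≤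
        ENNReal.ofReal (c * R ^ ((N : ℝ) - s)) := by
  set f : EuclideanSpace ℝ (Fin N) → ℝ := fun x => if ‖x‖ < 1 then ‖x‖ ^ (-s) else 0 with hf
  have hf0 : ∀ x, 0 ≤ f x := fun x => by simp only [hf]; split_ifs <;> positivity
  have hfi : Integrable f := by
    have h1 : IntegrableOn (fun x : EuclideanSpace ℝ (Fin N) => ‖x‖ ^ (-s)) (ball 0 1) := by
      refine integrableOn_ball_of_norm_le_rpow (C := 1) (α := s) ?_ ?_ ?_ ?_
      · simp; omega
      · simpa using hs
      · refine Filter.Eventually.of_forall fun x => ?_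
        rw [Real.norm_of_nonneg (by positivity), one_mul]
      · exact (Measurable.pow_const measurable_norm _).aestronglyMeasurable
    rw [← integrable_indicator_iff measurableSet_ball] at h1
    refine h1.congr (Filter.Eventually.of_forall fun x => ?_)
    simp [hf, indicator]
  refine ⟨(∫ x, f x) + 1, by have := integral_nonneg (μ := volume) (f := f) hf0; positivity, fun y R hR => ?_⟩
  have e1 : ∀ x, (if ‖x‖ < R then ‖x‖ ^ (-s) else 0) = R ^ (-s) * f (R⁻¹ • x) := by
    intro x
    simp only [hf, norm_smul, norm_inv, Real.norm_of_nonneg hR.le]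
    have : R⁻¹ * ‖x‖ < 1 ↔ ‖x‖ < R := by rw [inv_mul_lt_iff₀ hR, mul_one]
    simp only [this]
    split_ifs
    · rw [← Real.mul_rpow hR.le (by positivity), mul_inv_cancel_left₀ hR.ne']
    · simp
  have e2 := lintegral_sub_right_eq_self (μ := (volume : Measure (EuclideanSpace ℝ (Fin N))))
    (fun x => ENNReal.ofReal (if ‖x‖ < R then ‖x‖ ^ (-s) else 0)) y
  simp only [dist_eq_norm]
  rw [e2]
  simp only [e1]
  rw [← ofReal_integral_eq_lintegral_ofReal ((hfi.comp_smul (inv_ne_zero hR.ne')).const_mul _)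
    (Filter.Eventually.of_forall fun x => mul_nonneg (by positivity) (hf0 _)), integral_const_mul,
    Measure.integral_comp_inv_smul_of_nonneg _ _ hR.le]
  apply ENNReal.ofReal_le_ofReal
  rw [sub_eq_neg_add, Real.rpow_add hR, Real.rpow_natCast]
  simp only [finrank_euclideanSpace, Fintype.card_fin, smul_eq_mul]
  have : 0 ≤ R ^ (-s) * R ^ N := by positivity
  nlinarith

lemma arith1 {N α γ M β C c1 c2 m m0 q : ℝ} (hM0 : 0 ≤ M) (hα0 : 0 < α) (hγ0 : 0 ≤ γ)
    (hM : M = N - 2 - 2 * α) (hβ : β = α + M)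
    (hC : 0 < C) (hc1 : 0 < c1) (hc2 : 0 < c2) (hm : 0 < m) (hm0 : m ≤ m0) (h1 : 1 ≤ m0)
    (hq1 : β / (N - α) ≤ q) (hq2 : (M + γ) / (N + γ) ≤ q) (hq : q ≤ 1) :
    C * (((m ^ (1 / (N - α))) ^ (-β) + (m ^ (1 / (N + γ))) ^ (-(M + γ))) * m +
      c1 * (m ^ (1 / (N - α))) ^ (2 : ℝ) + c1 * (m ^ (1 / (N - α))) ^ (2 : ℝ) +
      c2 * (m ^ (1 / (N + γ))) ^ (N - M)) ≤ (C * (2 + 2 * c1 + c2) * m0) * m ^ (1 - q) := by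
  have hA : 0 < N - α := by linarith
  have hB : 0 < N + γ := by linarith
  have key : ∀ u, 0 ≤ u → u ≤ q → m ^ (1 - u) ≤ m0 * m ^ (1 - q) := by
    intro u hu0 hu
    have : m ^ (1 - u) = m ^ (q - u) * m ^ (1 - q) := by
      rw [← Real.rpow_add hm]; ring_nf
    rw [this]
    gcongr
    calc m ^ (q - u) ≤ m0 ^ (q - u) := Real.rpow_le_rpow hm.le hm0 (by linarith)
      _ ≤ m0 := by simpa using Real.rpow_le_rpow_of_exponent_le h1 (by linarith : q - u ≤ 1)
  have k1 := key _ (div_nonneg (by linarith) hA.le) hq1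
  have k2 := key _ (div_nonneg (by linarith) hB.le) hq2
  have s1 : (m ^ (1 / (N - α))) ^ (-β) * m = m ^ (1 - β / (N - α)) := by
    rw [← Real.rpow_mul hm.le]; nth_rewrite 2 [← Real.rpow_one m]
    rw [← Real.rpow_add hm]; congr 1; ring
  have s2 : (m ^ (1 / (N + γ))) ^ (-(M + γ)) * m = m ^ (1 - (M + γ) / (N + γ)) := by
    rw [← Real.rpow_mul hm.le]; nth_rewrite 2 [← Real.rpow_one m]
    rw [← Real.rpow_add hm]; congr 1; ring
  have s3 : (m ^ (1 / (N - α))) ^ (2:ℝ) = m ^ (1 - β / (N - α)) := by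
    rw [← Real.rpow_mul hm.le]; congr 1; field_simp; rw [hβ, hM]; ring
  have s4 : (m ^ (1 / (N + γ))) ^ (N - M) = m ^ (1 - (M + γ) / (N + γ)) := by
    rw [← Real.rpow_mul hm.le]; congr 1; field_simp; ring
  rw [add_mul, s1, s2, s3, s4]
  set P := m0 * m ^ (1 - q)
  have : C * (2 + 2 * c1 + c2) * m0 * m ^ (1 - q) = C * ((P + P) + c1 * P + c1 * P + c2 * P) := by
    simp only [P]; ring
  rw [this]
  gcongr

lemma arith2 {t m A q p W : ℝ} (ht : 0 < t) (hm : 0 < m) (hA : 0 < A) (hW : 0 ≤ W)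
    (hp : 0 < p) (hpq : q = 1 / p) (h : t * m ≤ A * m ^ (1 - q) * W) :
    m ≤ A ^ p * t ^ (-p) * W ^ p := by
  have h1 : m ^ (1 - q) = m * (m ^ q)⁻¹ := by
    rw [Real.rpow_sub hm, Real.rpow_one]; rfl
  have hq : 0 < m ^ q := by positivity
  have h2 : m ^ q ≤ A * t⁻¹ * W := by
    rw [h1] at h
    have : m * t ≤ m * (A * W / m ^ q) := by
      calc m * t = t * m := by ring
        _ ≤ _ := h
        _ = _ := by ring
    have := le_of_mul_le_mul_left this hm
    rw [le_div_iff₀ hq] at this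
    rw [show A * t⁻¹ * W = (A * W) / t by ring, le_div_iff₀ ht]; linarith
  have h3 : (m ^ q) ^ p = m := by
    rw [← Real.rpow_mul hm.le, hpq, one_div_mul_cancel hp.ne', Real.rpow_one]
  calc m = (m ^ q) ^ p := h3.symm
    _ ≤ (A * t⁻¹ * W) ^ p := Real.rpow_le_rpow hq.le h2 hp.le
    _ = _ := by
      rw [Real.mul_rpow (by positivity) hW, Real.mul_rpow hA.le (by positivity), Real.inv_rpow ht.le,
        Real.rpow_neg ht.le]

lemma pExp_facts {N : ℕ} (hN : 2 < N) {α γ : ℝ} (hα0 : 0 < α) (hα : α ≤ ((N : ℝ) - 2) / 2)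
    (hγ0 : 0 ≤ γ) : 1 < pExp N α γ ∧ ((N : ℝ) - 2 - α) / (N - α) ≤ 1 / pExp N α γ ∧
      ((N : ℝ) - 2 - 2 * α + γ) / (N + γ) ≤ 1 / pExp N α γ := by
  have hN' : (2 : ℝ) < N := by exact_mod_cast hN
  have a1 : 0 < (N : ℝ) - α := by linarith
  have a2 : 0 < (N : ℝ) - 2 - α := by linarith
  have a3 : 0 < (N : ℝ) + γ := by linarith
  have b1 : 1 < ((N : ℝ) - α) / ((N : ℝ) - 2 - α) := by rw [lt_div_iff₀ a2]; linarith
  unfold pExp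
  split_ifs with h
  · refine ⟨b1, by rw [one_div_div], ?_⟩
    rw [show (N : ℝ) - 2 - 2 * α + γ = 0 by linarith, zero_div]
    positivity
  · have a4 : 0 < (N : ℝ) - 2 + γ - 2 * α := lt_of_le_of_ne (by linarith) (Ne.symm h)
    have b2 : 1 < ((N : ℝ) + γ) / ((N : ℝ) - 2 + γ - 2 * α) := by rw [lt_div_iff₀ a4]; linarith
    have b3 := lt_min b1 b2
    refine ⟨b3, ?_, ?_⟩
    · rw [← one_div_div]
      exact one_div_le_one_div_of_le (by linarith) (min_le_left _ _)
    · rw [← one_div_div, show (N : ℝ) - 2 - 2 * α + γ = (N : ℝ) - 2 + γ - 2 * α by ring]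
      exact one_div_le_one_div_of_le (by linarith) (min_le_right _ _)

lemma inner_est {N : ℕ} {Ω : Set (EuclideanSpace ℝ (Fin N))}
    {α γ M β n2 δ D C c1 c2 m0 m q : ℝ} (hα0 : 0 < α) (hγ0 : 0 ≤ γ) (hγ1 : γ ≤ 1)
    (hM0 : 0 ≤ M) (hM : M = (N : ℝ) - 2 - 2 * α) (hβ : β = α + M) (hn2 : n2 = α + β)
    (hδ : 0 < δ) (hD : 1 ≤ D)
    (hC1 : 4 * δ ^ (-γ) * D ≤ C) (hC2 : 4 * δ ^ (-α) ≤ C) (hC3 : 4 * (δ ^ (-α) * δ ^ (-α)) * D ≤ C)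
    (hpos : ∀ x ∈ Ω, 0 < infDist x (frontier Ω)) (hle : ∀ x ∈ Ω, infDist x (frontier Ω) ≤ D)
    (hnear : ∀ x : EuclideanSpace ℝ (Fin N), ‖x‖ < δ → δ ≤ infDist x (frontier Ω))
    (hc1 : 0 < c1) (hc2 : 0 < c2)
    (hb1 : ∀ (y : EuclideanSpace ℝ (Fin N)) (R : ℝ), 0 < R →
      ∫⁻ x, ENNReal.ofReal (if dist x y < R then dist x y ^ (-n2) else 0) ≤
        ENNReal.ofReal (c1 * R ^ ((N : ℝ) - n2)))
    (hb2 : ∀ (y : EuclideanSpace ℝ (Fin N)) (R : ℝ), 0 < R →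
      ∫⁻ x, ENNReal.ofReal (if dist x y < R then dist x y ^ (-M) else 0) ≤
        ENNReal.ofReal (c2 * R ^ ((N : ℝ) - M)))
    (hm : 0 < m) (hm0 : m ≤ m0) (h1 : 1 ≤ m0)
    (hq1 : β / (N - α) ≤ q) (hq2 : (M + γ) / (N + γ) ≤ q) (hq : q ≤ 1)
    {E : Set (EuclideanSpace ℝ (Fin N))} (hE : MeasurableSet E) (hEΩ : E ⊆ Ω \ {0})
    (hEm : ∫⁻ x in E, ENNReal.ofReal (infDist x (frontier Ω) * ‖x‖ ^ (-α)) = ENNReal.ofReal m)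
    {y : EuclideanSpace ℝ (Fin N)} (hy : y ∈ Ω) :
    ∫⁻ x in E, ENNReal.ofReal
            (‖x‖ ^ (-α) * dist x y ^ (-M) *
              infDist y (frontier Ω) ^ (-γ) *
              min 1 (infDist x (frontier Ω) * infDist y (frontier Ω) / dist x y ^ 2)) *
          ENNReal.ofReal (infDist x (frontier Ω) * ‖x‖ ^ (-α)) ≤
      ENNReal.ofReal ((C * (2 + 2 * c1 + c2) * m0) * m ^ (1 - q)) := by
  have hC : 0 < C := lt_of_lt_of_le (by positivity) hC2
  set R1 := m ^ (1 / (N - α)) with hR1d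
  set R2 := m ^ (1 / (N + γ)) with hR2d
  have hR1 : 0 < R1 := by positivity
  have hR2 : 0 < R2 := by positivity
  set i : ℝ → ℝ → EuclideanSpace ℝ (Fin N) → EuclideanSpace ℝ (Fin N) → ℝ :=
    fun s R y x => if dist x y < R then dist x y ^ (-s) else 0 with hi
  have hi0 : ∀ s R y x, 0 ≤ i s R y x := by
    intro s R y x; simp only [hi]; split_ifs <;> positivity
  have him : ∀ s R y, Measurable (fun x => ENNReal.ofReal (i s R y x)) := by
    intro s R y
    refine ENNReal.measurable_ofReal.comp ?_
    refine Measurable.ite (measurableSet_ball (x := y)) ?_ measurable_const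
    exact (measurable_id.dist measurable_const).pow_const _
  have hwm : Measurable (fun x : EuclideanSpace ℝ (Fin N) =>
      ENNReal.ofReal (infDist x (frontier Ω) * ‖x‖ ^ (-α))) :=
    ENNReal.measurable_ofReal.comp (measurable_infDist.mul (measurable_norm.pow_const _))
  have step1 : ∀ x ∈ E, ENNReal.ofReal
            (‖x‖ ^ (-α) * dist x y ^ (-M) *
              infDist y (frontier Ω) ^ (-γ) *
              min 1 (infDist x (frontier Ω) * infDist y (frontier Ω) / dist x y ^ 2)) *
          ENNReal.ofReal (infDist x (frontier Ω) * ‖x‖ ^ (-α)) ≤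
      ENNReal.ofReal C * (ENNReal.ofReal (R1 ^ (-β) + R2 ^ (-(M + γ))) *
        ENNReal.ofReal (infDist x (frontier Ω) * ‖x‖ ^ (-α)) + ENNReal.ofReal (i n2 R1 0 x) +
        ENNReal.ofReal (i n2 R1 y x) + ENNReal.ofReal (i M R2 y x)) := by
    intro x hx
    have hxΩ := hEΩ hx
    have ha := hpos x hxΩ.1
    have hb := hpos y hy
    have hX : 0 < ‖x‖ := norm_pos_iff.2 hxΩ.2
    have := pointwise hα0 hγ0 hγ1 hM0 hβ hn2 hδ hD hC1 hC2 hC3 hR1 hR2 hX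
      (dist_nonneg (x := x) (y := y)) ha hb infDist_le_infDist_add_dist (hle x hxΩ.1) (hnear x)
    have hw : 0 ≤ (R1 ^ (-β) + R2 ^ (-(M + γ))) * (infDist x (frontier Ω) * ‖x‖ ^ (-α)) := by
      positivity
    have j0 := hi0 n2 R1 0 x
    have j1 := hi0 n2 R1 y x
    have j2 := hi0 M R2 y x
    rw [← ENNReal.ofReal_mul (by positivity), ← ENNReal.ofReal_mul (by positivity),
      ← ENNReal.ofReal_add hw j0, ← ENNReal.ofReal_add (by positivity) j1,
      ← ENNReal.ofReal_add (by positivity) j2, ← ENNReal.ofReal_mul hC.le]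
    apply ENNReal.ofReal_le_ofReal
    simpa only [hi, dist_zero_right] using this
  refine (setLIntegral_mono' hE step1).trans ?_
  rw [lintegral_const_mul' _ _ ENNReal.ofReal_ne_top, lintegral_add_right _ (him _ _ _),
    lintegral_add_right _ (him _ _ _), lintegral_add_right _ (him _ _ _),
    lintegral_const_mul' _ _ ENNReal.ofReal_ne_top, hEm]
  have f1 : ∀ y, ∫⁻ x in E, ENNReal.ofReal (i n2 R1 y x) ≤ ENNReal.ofReal (c1 * R1 ^ (2:ℝ)) := by
    intro y
    refine (setLIntegral_le_lintegral _ _).trans ((hb1 y R1 hR1).trans_eq ?_)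
    congr 3; rw [hn2, hβ, hM]; ring
  have f2 : ∫⁻ x in E, ENNReal.ofReal (i M R2 y x) ≤ ENNReal.ofReal (c2 * R2 ^ ((N:ℝ) - M)) :=
    (setLIntegral_le_lintegral _ _).trans (hb2 y R2 hR2)
  calc _ ≤ ENNReal.ofReal C * (ENNReal.ofReal (R1 ^ (-β) + R2 ^ (-(M + γ))) * ENNReal.ofReal m +
          ENNReal.ofReal (c1 * R1 ^ (2:ℝ)) + ENNReal.ofReal (c1 * R1 ^ (2:ℝ)) +
          ENNReal.ofReal (c2 * R2 ^ ((N:ℝ) - M))) := by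
        gcongr
        · exact f1 0
        · exact f1 y
    _ = ENNReal.ofReal (C * ((R1 ^ (-β) + R2 ^ (-(M + γ))) * m + c1 * R1 ^ (2:ℝ) +
          c1 * R1 ^ (2:ℝ) + c2 * R2 ^ ((N:ℝ) - M))) := by
        rw [← ENNReal.ofReal_mul (by positivity), ← ENNReal.ofReal_add (by positivity) (by positivity),
          ← ENNReal.ofReal_add (by positivity) (by positivity),
          ← ENNReal.ofReal_add (by positivity) (by positivity), ← ENNReal.ofReal_mul hC.le]
    _ ≤ _ := ENNReal.ofReal_le_ofReal
        (arith1 hM0 hα0 hγ0 hM hβ hC hc1 hc2 hm hm0 h1 hq1 hq2 hq)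

/-- Weak Lebesgue estimate for the potential
`U(x) = ∫ |x|^{−α} |x−y|^{−N+2+2α} d(y)^{−γ} min{1, d(x)d(y)/|x−y|²} dω(y)`
with respect to the weight `d(x)|x|^{−α}`. -/
theorem weak_estimate_F_minus (N : ℕ) (hN : 2 < N) (Ω : Set (EuclideanSpace ℝ (Fin N)))
    (hΩo : IsOpen Ω) (hΩb : Bornology.IsBounded Ω) (h0 : (0 : EuclideanSpace ℝ (Fin N)) ∈ Ω)
    (α γ : ℝ) (hα0 : 0 < α) (hα : α ≤ ((N : ℝ) - 2) / 2) (hγ0 : 0 ≤ γ) (hγ1 : γ ≤ 1) :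
    ∃ C : ℝ, 0 < C ∧ ∀ (ω : Measure (EuclideanSpace ℝ (Fin N))), IsFiniteMeasure ω →
      ∀ t : ℝ, 0 < t →
      (∫⁻ x in {x | x ∈ Ω \ {0} ∧ ENNReal.ofReal t <
          ∫⁻ y in Ω \ {0}, ENNReal.ofReal
            (‖x‖ ^ (-α) * dist x y ^ (-(N : ℝ) + 2 + 2 * α) *
              infDist y (frontier Ω) ^ (-γ) *
              min 1 (infDist x (frontier Ω) * infDist y (frontier Ω) / dist x y ^ 2)) ∂ω},
        ENNReal.ofReal (infDist x (frontier Ω) * ‖x‖ ^ (-α)))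
      ≤ ENNReal.ofReal (C * t ^ (-(pExp N α γ))) * (ω (Ω \ {0})) ^ (pExp N α γ) := by
  have hN' : (2 : ℝ) < N := by exact_mod_cast hN
  have : Nonempty (Fin N) := ⟨⟨0, by omega⟩⟩
  obtain ⟨hp1, hq1, hq2⟩ := pExp_facts hN hα0 hα hγ0
  set p := pExp N α γ with hp
  have hp0 : 0 < p := by linarith
  set M : ℝ := (N : ℝ) - 2 - 2 * α with hM
  have hM0 : 0 ≤ M := by linarith
  have hexp : -(N : ℝ) + 2 + 2 * α = -M := by rw [hM]; ring
  rw [hexp]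
  have hfne : (frontier Ω).Nonempty := by
    rw [nonempty_iff_ne_empty]
    intro h
    rcases frontier_eq_empty_iff.1 h with h | h
    · rw [h] at h0; exact h0
    · rw [h] at hΩb
      exact NormedSpace.unbounded_univ ℝ (EuclideanSpace ℝ (Fin N)) hΩb
  have hpos : ∀ x ∈ Ω, 0 < infDist x (frontier Ω) := by
    intro x hx
    rw [← isClosed_frontier.notMem_iff_infDist_pos hfne]
    intro h
    rw [hΩo.frontier_eq] at h
    exact h.2 hx
  obtain ⟨R0, hR0, hΩR⟩ := hΩb.subset_ball_lt 0 0
  set δ := infDist (0 : EuclideanSpace ℝ (Fin N)) (frontier Ω) / 2 with hδd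
  have hδ : 0 < δ := half_pos (hpos 0 h0)
  have hnear : ∀ x : EuclideanSpace ℝ (Fin N), ‖x‖ < δ → δ ≤ infDist x (frontier Ω) := by
    intro x hx
    have := infDist_le_infDist_add_dist (s := frontier Ω) (x := 0) (y := x)
    rw [dist_zero_left] at this
    linarith
  set D := 2 * δ + R0 + 1 with hDd
  have hD : 1 ≤ D := by linarith
  have hle : ∀ x ∈ Ω, infDist x (frontier Ω) ≤ D := by
    intro x hx
    have := infDist_le_infDist_add_dist (s := frontier Ω) (x := x) (y := 0)
    have h2 := hΩR hx
    rw [mem_ball] at h2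
    linarith
  obtain ⟨c1, hc1, hb1⟩ := ball_int N hN (α + (α + M)) (by linarith) (by linarith)
  obtain ⟨c2, hc2, hb2⟩ := ball_int N hN M (by linarith) (by linarith)
  obtain ⟨c3, hc3, hb3⟩ := ball_int N hN α (by linarith) (by linarith)
  set m0 := D * (c3 * R0 ^ ((N : ℝ) - α)) + 1 with hm0d
  have hm01 : 1 ≤ m0 := by
    have : 0 ≤ D * (c3 * R0 ^ ((N : ℝ) - α)) := by positivity
    linarith
  obtain ⟨C, hC1, hC2, hC3⟩ : ∃ C : ℝ, 4 * δ ^ (-γ) * D ≤ C ∧ 4 * δ ^ (-α) ≤ C ∧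
      4 * (δ ^ (-α) * δ ^ (-α)) * D ≤ C :=
    ⟨max (4 * δ ^ (-γ) * D) (max (4 * δ ^ (-α)) (4 * (δ ^ (-α) * δ ^ (-α)) * D)),
      le_max_left _ _, (le_max_left _ _).trans (le_max_right _ _),
      (le_max_right _ _).trans (le_max_right _ _)⟩
  have hC : 0 < C := lt_of_lt_of_le (by positivity) hC2
  set A := C * (2 + 2 * c1 + c2) * m0 with hAd
  have hA : 0 < A := by positivity
  refine ⟨A ^ p, by positivity, ?_⟩
  intro ω hω t ht
  have hSm : MeasurableSet (Ω \ {0}) := hΩo.measurableSet.diff (measurableSet_singleton 0)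
  set k : EuclideanSpace ℝ (Fin N) → EuclideanSpace ℝ (Fin N) → ENNReal := fun x y => ENNReal.ofReal
            (‖x‖ ^ (-α) * dist x y ^ (-M) *
              infDist y (frontier Ω) ^ (-γ) *
              min 1 (infDist x (frontier Ω) * infDist y (frontier Ω) / dist x y ^ 2)) with hk
  have hkm : Measurable (Function.uncurry k) := by
    refine ENNReal.measurable_ofReal.comp ?_
    have md : Measurable (fun z : EuclideanSpace ℝ (Fin N) × EuclideanSpace ℝ (Fin N) =>
      dist z.1 z.2) := measurable_dist
    have m1 : Measurable (fun z : EuclideanSpace ℝ (Fin N) × EuclideanSpace ℝ (Fin N) =>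
      infDist z.1 (frontier Ω)) := measurable_infDist.comp measurable_fst
    have m2 : Measurable (fun z : EuclideanSpace ℝ (Fin N) × EuclideanSpace ℝ (Fin N) =>
      infDist z.2 (frontier Ω)) := measurable_infDist.comp measurable_snd
    exact (((measurable_fst.norm.pow_const _).mul (md.pow_const _)).mul (m2.pow_const _)).mul
      (measurable_const.min ((m1.mul m2).div (md.pow_const 2)))
  set w : EuclideanSpace ℝ (Fin N) → ENNReal := fun x =>
      ENNReal.ofReal (infDist x (frontier Ω) * ‖x‖ ^ (-α)) with hwd
  have hwm : Measurable w :=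
    ENNReal.measurable_ofReal.comp (measurable_infDist.mul (measurable_norm.pow_const _))
  set E := {x | x ∈ Ω \ {0} ∧ ENNReal.ofReal t < ∫⁻ y in Ω \ {0}, k x y ∂ω} with hEd
  have hUm : Measurable (fun x => ∫⁻ y in Ω \ {0}, k x y ∂ω) := hkm.lintegral_prod_right
  have hE : MeasurableSet E := hSm.inter (measurableSet_lt measurable_const hUm)
  have hEΩ : E ⊆ Ω \ {0} := fun x hx => hx.1
  have hfin : ∫⁻ x in E, w x ≤ ENNReal.ofReal m0 := by
    calc ∫⁻ x in E, w x ≤ ∫⁻ x in E, ENNReal.ofReal D *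
            ENNReal.ofReal (if dist x 0 < R0 then dist x 0 ^ (-α) else 0) := by
          refine setLIntegral_mono' hE fun x hx => ?_
          have hxΩ := (hEΩ hx).1
          have h2 := hΩR hxΩ
          rw [mem_ball] at h2
          rw [if_pos h2, ← ENNReal.ofReal_mul (by positivity), dist_zero_right]
          apply ENNReal.ofReal_le_ofReal
          gcongr
          exact hle x hxΩ
      _ ≤ ENNReal.ofReal D * ENNReal.ofReal (c3 * R0 ^ ((N : ℝ) - α)) := by
          rw [lintegral_const_mul' _ _ ENNReal.ofReal_ne_top]
          gcongr
          exact (setLIntegral_le_lintegral _ _).trans (hb3 0 R0 hR0)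
      _ ≤ _ := by
          rw [← ENNReal.ofReal_mul (by positivity)]
          exact ENNReal.ofReal_le_ofReal (by linarith)
  have hfin' : ∫⁻ x in E, w x ≠ ⊤ := ne_top_of_le_ne_top ENNReal.ofReal_ne_top hfin
  change ∫⁻ x in E, w x ≤ _
  set m := (∫⁻ x in E, w x).toReal with hmd
  have hEm : ∫⁻ x in E, w x = ENNReal.ofReal m := (ENNReal.ofReal_toReal hfin').symm
  have hmnn : 0 ≤ m := ENNReal.toReal_nonneg
  rcases hmnn.eq_or_lt with hm | hm
  · rw [hEm, ← hm]; simp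
  have hm0 : m ≤ m0 := ENNReal.toReal_le_of_le_ofReal (by linarith) hfin
  set W := (ω (Ω \ {0})).toReal with hWd
  have hW0 : 0 ≤ W := ENNReal.toReal_nonneg
  have hW : ω (Ω \ {0}) = ENNReal.ofReal W := (ENNReal.ofReal_toReal (measure_ne_top _ _)).symm
  have hq : 1 / p ≤ 1 := by rw [div_le_one hp0]; linarith
  have main : ENNReal.ofReal t * ENNReal.ofReal m ≤
      ENNReal.ofReal (A * m ^ (1 - 1 / p)) * ENNReal.ofReal W := by
    calc ENNReal.ofReal t * ENNReal.ofReal m = ∫⁻ x in E, ENNReal.ofReal t * w x := by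
          rw [lintegral_const_mul' _ _ ENNReal.ofReal_ne_top, hEm]
      _ ≤ ∫⁻ x in E, (∫⁻ y in Ω \ {0}, k x y ∂ω) * w x := by
          refine setLIntegral_mono' hE fun x hx => ?_
          gcongr
          exact hx.2.le
      _ = ∫⁻ x in E, (∫⁻ y in Ω \ {0}, k x y * w x ∂ω) := by
          refine lintegral_congr fun x => ?_
          rw [lintegral_mul_const' _ _ ENNReal.ofReal_ne_top]
      _ = ∫⁻ y in Ω \ {0}, (∫⁻ x in E, k x y * w x) ∂ω := by
          refine lintegral_lintegral_swap ?_
          exact (hkm.mul (hwm.comp measurable_fst)).aemeasurable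
      _ ≤ ∫⁻ _ in Ω \ {0}, ENNReal.ofReal (A * m ^ (1 - 1 / p)) ∂ω := by
          refine setLIntegral_mono' hSm fun y hy => ?_
          refine inner_est hα0 hγ0 hγ1 hM0 hM rfl rfl hδ hD hC1 hC2 hC3 hpos hle hnear hc1 hc2 hb1 hb2
            hm hm0 hm01 ?_ hq2 hq hE hEΩ hEm hy.1
          convert hq1 using 2
          rw [hM]; ring
      _ = _ := by rw [setLIntegral_const, hW]
  rw [← ENNReal.ofReal_mul ht.le, ← ENNReal.ofReal_mul (by positivity),
    ENNReal.ofReal_le_ofReal_iff (by positivity)] at main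
  have fin := arith2 ht hm hA hW0 hp0 rfl main
  rw [hEm, hW, ENNReal.ofReal_rpow_of_nonneg hW0 hp0.le, ← ENNReal.ofReal_mul (by positivity)]
  exact ENNReal.ofReal_le_ofReal fin
end

section
/- Let N > 2 be an integer, Ω ⊂ ℝ^N a nonempty bounded open set with 0 ∈ Ω, let 0 < α ≤ (N−2)/2 and 0 ≤ γ ≤ 1. Set p = min{ (N−α)/(N−2−α), (N+γ)/(N−2+γ) }. Then there exists C = C(N, Ω, α, γ) > 0 such that for every finite positive Borel measure ω on Ω ∖ {0} and every λ > 0: ∫_{{x ∈ Ω∖{0} : U(x) > λ}} d(x)|x|^{−α} dx ≤ C λ^{−p} ω(Ω∖{0})^p, where U(x) = ∫_{Ω∖{0}} |x|^{α} |x−y|^{2−N} d(y)^{−γ} · min{1, d(x)d(y)/|x−y|^2} dω(y). -/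
open MeasureTheory Metric Set

lemma aux_key1 (dx dy r γ D : ℝ) (hx : 0 ≤ dx) (hy : 0 ≤ dy) (hr : 0 < r) (h : dx ≤ dy + r)
    (hD : dy ≤ D) (h1 : γ ≤ 1) :
    dy ^ (-γ) * min 1 (dx * dy / r ^ 2) * dx ≤ 4 * D ^ (1 - γ) := by
  rcases hy.eq_or_lt with h0 | h0
  · subst h0
    simp
    positivity
  have e : dy ^ (-γ) * dy = dy ^ (1 - γ) := by
    rw [sub_eq_neg_add, Real.rpow_add h0, Real.rpow_one]
  have e2 : dy ^ (1 - γ) ≤ D ^ (1 - γ) := Real.rpow_le_rpow hy hD (by linarith)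
  have hp : 0 < dy ^ (-γ) := Real.rpow_pos_of_pos h0 _
  have hp1 : 0 < dy ^ (1-γ) := Real.rpow_pos_of_pos h0 _
  have key : min 1 (dx * dy / r ^ 2) * dx ≤ 4 * dy := by
    rcases le_total r dy with hc | hc
    · calc _ ≤ 1 * dx := by gcongr; exact min_le_left _ _
        _ ≤ _ := by linarith
    · calc _ ≤ (dx * dy / r ^ 2) * dx := by gcongr; exact min_le_right _ _
        _ = dy * (dx / r) ^ 2 := by field_simp
        _ ≤ dy * 2 ^ 2 := by
          gcongr
          rw [div_le_iff₀ hr]; linarith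
        _ = _ := by ring
  calc _ = dy ^ (-γ) * (min 1 (dx * dy / r ^ 2) * dx) := by ring
    _ ≤ dy ^ (-γ) * (4 * dy) := by gcongr
    _ = 4 * dy ^ (1 - γ) := by rw [← e]; ring
    _ ≤ _ := by linarith

lemma aux_key2 (dx dy r γ : ℝ) (hx : 0 ≤ dx) (hy : 0 ≤ dy) (hr : 0 < r) (h : dx ≤ dy + r)
    (h0γ : 0 ≤ γ) (h1 : γ ≤ 1) :
    dy ^ (-γ) * min 1 (dx * dy / r ^ 2) ≤ 2 * r ^ (-γ) := by
  have hpr : 0 < r ^ (-γ) := Real.rpow_pos_of_pos hr _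
  rcases hy.eq_or_lt with h0 | h0
  · subst h0
    simp
    positivity
  have e : dy ^ (-γ) * dy = dy ^ (1 - γ) := by
    rw [sub_eq_neg_add, Real.rpow_add h0, Real.rpow_one]
  have er : r ^ (-γ) * r = r ^ (1 - γ) := by
    rw [sub_eq_neg_add, Real.rpow_add hr, Real.rpow_one]
  have hp : 0 < dy ^ (-γ) := Real.rpow_pos_of_pos h0 _
  rcases le_total r dy with hc | hc
  · have := Real.rpow_le_rpow_of_nonpos hr hc (by linarith : -γ ≤ 0)
    calc _ ≤ dy ^ (-γ) * 1 := by gcongr; exact min_le_left _ _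
      _ ≤ _ := by linarith
  · have e2 : dy ^ (1 - γ) ≤ r ^ (1 - γ) := Real.rpow_le_rpow hy hc (by linarith)
    calc _ ≤ dy ^ (-γ) * (dx * dy / r ^ 2) := by gcongr; exact min_le_right _ _
      _ = dy ^ (1 - γ) * (dx / r) / r := by rw [← e]; field_simp
      _ ≤ r ^ (1 - γ) * 2 / r := by
        gcongr
        rw [div_le_iff₀ hr]; linarith
      _ = _ := by rw [← er]; field_simp

lemma aux_ball (N : ℕ) (hN : 2 < N) : ∃ c : ℝ, 0 < c ∧ ∀ (y : EuclideanSpace ℝ (Fin N)) (ρ : ℝ),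
    0 < ρ → ∫⁻ x in ball y ρ, ENNReal.ofReal (dist x y ^ (2 - (N : ℝ))) ≤
      ENNReal.ofReal (c * ρ ^ 2) := by
  have : Nonempty (Fin N) := ⟨⟨0, by omega⟩⟩
  have hfr : Module.finrank ℝ (EuclideanSpace ℝ (Fin N)) = N := by simp
  have : Nontrivial (EuclideanSpace ℝ (Fin N)) := inferInstance
  set b := (volume (ball (0 : EuclideanSpace ℝ (Fin N)) 1)) with hb
  have hbt : b ≠ ⊤ := measure_ball_lt_top.ne
  have hb0 : 0 < b := measure_ball_pos _ _ one_pos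
  refine ⟨N * b.toReal, ?_, ?_⟩
  · have := ENNReal.toReal_pos hb0.ne' hbt
    positivity
  intro y ρ hρ
  set f : ℝ → ℝ := (Iio ρ).indicator (fun r => r ^ (2 - (N : ℝ))) with hf
  have hfp : ∀ x : EuclideanSpace ℝ (Fin N), 0 ≤ f ‖x‖ := by
    intro x
    simp only [hf, indicator]
    split_ifs <;> positivity
  have e1 : ∫⁻ x in ball y ρ, ENNReal.ofReal (dist x y ^ (2 - (N : ℝ))) =
      ∫⁻ x : EuclideanSpace ℝ (Fin N), ENNReal.ofReal (f ‖x‖) := by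
    rw [← lintegral_indicator measurableSet_ball,
      ← lintegral_sub_right_eq_self (fun x => ENNReal.ofReal (f ‖x‖)) y]
    congr 1; ext x
    by_cases h : ‖x - y‖ < ρ <;> simp [hf, indicator, dist_eq_norm, h]
  have e3 : EqOn (fun r : ℝ => r ^ (N - 1) • f r) ((Iio ρ).indicator (fun r => r)) (Ioi 0) := by
    intro r hr
    have hr : 0 < r := hr
    by_cases h : r < ρ
    · simp only [hf, indicator, mem_Iio, h, if_true, smul_eq_mul]
      rw [← Real.rpow_natCast, ← Real.rpow_add hr]
      have : ((N - 1 : ℕ) : ℝ) + (2 - N) = 1 := by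
        rw [Nat.cast_sub (by omega)]; push_cast; ring
      rw [this, Real.rpow_one]
    · simp [hf, indicator, h]
  have hi : Integrable (fun x : EuclideanSpace ℝ (Fin N) => f ‖x‖) := by
    rw [integrable_fun_norm_addHaar volume, hfr, integrableOn_congr_fun e3 measurableSet_Ioi]
    rw [IntegrableOn, integrable_indicator_iff measurableSet_Iio, IntegrableOn,
      Measure.restrict_restrict measurableSet_Iio, inter_comm, Ioi_inter_Iio]
    exact (continuous_id.integrableOn_Icc (a := 0) (b := ρ)).mono_set Ioo_subset_Icc_self
  rw [e1, ← ofReal_integral_eq_lintegral_ofReal hi (Filter.Eventually.of_forall hfp)]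
  apply ENNReal.ofReal_le_ofReal
  rw [integral_fun_norm_addHaar volume f, hfr, setIntegral_congr_fun measurableSet_Ioi e3,
    setIntegral_indicator measurableSet_Iio, Ioi_inter_Iio]
  have e2 : ∫ r in Ioo 0 ρ, r ≤ ρ ^ 2 := by
    rw [← integral_Ioc_eq_integral_Ioo, ← intervalIntegral.integral_of_le hρ.le, integral_id]
    nlinarith
  simp only [nsmul_eq_mul, smul_eq_mul]
  rw [mul_assoc]
  change _ * (b.toReal * _) ≤ _
  gcongr

lemma aux_alg (q a t m C : ℝ) (hq : 2 < q) (ha : 0 < a) (ht : 0 < t) (hm : 0 ≤ m) (hC : 0 < C)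
    (h : ∀ ρ : ℝ, 0 < ρ → t * a ≤ m * (C * (ρ ^ 2 + ρ ^ (2 - q) * a))) :
    a ≤ (2 * C) ^ (q / (q - 2)) * t ^ (-(q / (q - 2))) * m ^ (q / (q - 2)) := by
  have h1 := h (a ^ (1 / q)) (by positivity)
  have e1 : (a ^ (1 / q)) ^ 2 = a ^ (2 / q) := by
    rw [← Real.rpow_natCast, ← Real.rpow_mul ha.le]; congr 1; push_cast; ring
  have e2 : (a ^ (1 / q)) ^ (2 - q) * a = a ^ (2 / q) := by
    rw [← Real.rpow_mul ha.le]
    nth_rewrite 2 [← Real.rpow_one a]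
    rw [← Real.rpow_add ha]; congr 1; field_simp; ring
  rw [e1, e2] at h1
  have e3 : a = a ^ ((q - 2) / q) * a ^ (2 / q) := by
    rw [← Real.rpow_add ha, ← add_div]; simp [show q ≠ 0 by linarith]
  have hp : 0 < a ^ (2 / q) := by positivity
  have h2 : a ^ ((q - 2) / q) ≤ 2 * C * t⁻¹ * m := by
    have : t * a ^ ((q - 2) / q) ≤ 2 * C * m := by
      apply le_of_mul_le_mul_right _ hp
      calc _ = t * a := by nth_rewrite 3 [e3]; ring
        _ ≤ _ := h1
        _ = _ := by ring
    calc _ = t⁻¹ * (t * a ^ ((q - 2) / q)) := by field_simp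
      _ ≤ t⁻¹ * (2 * C * m) := by gcongr
      _ = _ := by ring
  have hpp : 0 ≤ q / (q - 2) := div_nonneg (by linarith) (by linarith)
  have h3 := Real.rpow_le_rpow (by positivity) h2 hpp
  rw [← Real.rpow_mul ha.le, Real.mul_rpow (by positivity) hm, Real.mul_rpow (by positivity)
    (by positivity), Real.inv_rpow ht.le, ← Real.rpow_neg ht.le] at h3
  have : (q - 2) / q * (q / (q - 2)) = 1 := by
    have : q - 2 ≠ 0 := by linarith
    field_simp
  rwa [this, Real.rpow_one] at h3

lemma aux_p (n α γ : ℝ) (hn : 2 < n) (hα0 : 0 < α) (hα : α ≤ (n - 2) / 2) (hγ0 : 0 ≤ γ) :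
    min ((n - α) / (n - 2 - α)) ((n + γ) / (n - 2 + γ)) = (n + γ) / (n + γ - 2) := by
  rw [min_eq_right, show n - 2 + γ = n + γ - 2 by ring]
  rw [div_le_div_iff₀ (by linarith) (by linarith)]
  nlinarith

lemma aux_pt1 (n dx dy r α γ D s : ℝ) (hn : 0 < n) (hx : 0 ≤ dx) (hy : 0 ≤ dy) (hr : 0 ≤ r)
    (hs : s < 0) (h : dx ≤ dy + r) (hD : dy ≤ D) (h1 : γ ≤ 1) :
    (n ^ α * r ^ s * dy ^ (-γ) * min 1 (dx * dy / r ^ 2)) * (dx * n ^ (-α)) ≤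
      4 * D ^ (1 - γ) * r ^ s := by
  rcases hr.eq_or_lt with h0 | h0
  · subst h0
    simp [Real.zero_rpow hs.ne]
  have e : n ^ α * n ^ (-α) = 1 := by rw [← Real.rpow_add hn]; simp
  have := aux_key1 dx dy r γ D hx hy h0 h hD h1
  calc _ = (n ^ α * n ^ (-α)) * r ^ s * (dy ^ (-γ) * min 1 (dx * dy / r ^ 2) * dx) := by ring
    _ = r ^ s * (dy ^ (-γ) * min 1 (dx * dy / r ^ 2) * dx) := by rw [e, one_mul]
    _ ≤ r ^ s * (4 * D ^ (1 - γ)) := by gcongr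
    _ = _ := by ring

lemma aux_pt2 (n dx dy r α γ R s ρ : ℝ) (hn : 0 < n) (hx : 0 ≤ dx) (hy : 0 ≤ dy) (hρ : 0 < ρ)
    (hr : ρ ≤ r) (hR : n ≤ R) (hα : 0 ≤ α)
    (hs : s < 0) (h : dx ≤ dy + r) (h0γ : 0 ≤ γ) (h1 : γ ≤ 1) :
    n ^ α * r ^ s * dy ^ (-γ) * min 1 (dx * dy / r ^ 2) ≤ 2 * R ^ α * ρ ^ (s - γ) := by
  have h0 : 0 < r := by linarith
  have := aux_key2 dx dy r γ hx hy h0 h h0γ h1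
  have hR0 : 0 < R := by linarith
  calc _ = (n ^ α * r ^ s) * (dy ^ (-γ) * min 1 (dx * dy / r ^ 2)) := by ring
    _ ≤ (R ^ α * r ^ s) * (2 * r ^ (-γ)) := by gcongr
    _ = 2 * R ^ α * r ^ (s - γ) := by rw [sub_eq_add_neg, Real.rpow_add h0]; ring
    _ ≤ _ := by
      gcongr 2 * R ^ α * ?_
      exact Real.rpow_le_rpow_of_nonpos hρ hr (by linarith)

/-- Weak Lebesgue estimate for the potential
`U(x) = ∫ |x|^{α} |x−y|^{2−N} d(y)^{−γ} min{1, d(x)d(y)/|x−y|²} dω(y)`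
with respect to the weight `d(x)|x|^{−α}`, with exponent
`p = min{(N−α)/(N−2−α), (N+γ)/(N−2+γ)}`. -/
theorem weak_estimate_F_plus (N : ℕ) (hN : 2 < N) (Ω : Set (EuclideanSpace ℝ (Fin N)))
    (hΩo : IsOpen Ω) (hΩb : Bornology.IsBounded Ω) (h0 : (0 : EuclideanSpace ℝ (Fin N)) ∈ Ω)
    (α γ : ℝ) (hα0 : 0 < α) (hα : α ≤ ((N : ℝ) - 2) / 2) (hγ0 : 0 ≤ γ) (hγ1 : γ ≤ 1) :
    ∃ C : ℝ, 0 < C ∧ ∀ (ω : Measure (EuclideanSpace ℝ (Fin N))), IsFiniteMeasure ω →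
      ∀ t : ℝ, 0 < t →
      (∫⁻ x in {x | x ∈ Ω \ {0} ∧ ENNReal.ofReal t <
          ∫⁻ y in Ω \ {0}, ENNReal.ofReal
            (‖x‖ ^ α * dist x y ^ (2 - (N : ℝ)) *
              infDist y (frontier Ω) ^ (-γ) *
              min 1 (infDist x (frontier Ω) * infDist y (frontier Ω) / dist x y ^ 2)) ∂ω},
        ENNReal.ofReal (infDist x (frontier Ω) * ‖x‖ ^ (-α)))
      ≤ ENNReal.ofReal
            (C * t ^ (-(min (((N : ℝ) - α) / ((N : ℝ) - 2 - α))
              (((N : ℝ) + γ) / ((N : ℝ) - 2 + γ))))) *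
          (ω (Ω \ {0})) ^ (min (((N : ℝ) - α) / ((N : ℝ) - 2 - α))
            (((N : ℝ) + γ) / ((N : ℝ) - 2 + γ))) := by
  classical
  have hN' : (2:ℝ) < N := by exact_mod_cast hN
  rw [aux_p N α γ hN' hα0 hα hγ0]
  obtain ⟨c, hc, hball⟩ := aux_ball N hN
  obtain ⟨R, hR, hΩR⟩ := hΩb.subset_ball_lt 0 0
  set d : EuclideanSpace ℝ (Fin N) → ℝ := fun x => infDist x (frontier Ω) with hd
  have hd0 : ∀ x, 0 ≤ d x := fun x => infDist_nonneg
  have hdl : ∀ x y, d x ≤ d y + dist x y := fun x y => infDist_le_infDist_add_dist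
  have hdm : Measurable d := (continuous_infDist_pt _).measurable
  have hnR : ∀ x ∈ Ω, ‖x‖ ≤ R := fun x hx => by
    have := hΩR hx
    rw [mem_ball_zero_iff] at this
    exact this.le
  set D := d 0 + R with hD
  have hDpos : 0 < D := by have := hd0 0; linarith
  have hdD : ∀ x ∈ Ω, d x ≤ D := fun x hx => by
    have h1 := hdl x 0
    have h2 := hnR x hx
    rw [dist_zero_right] at h1
    linarith
  set S := Ω \ {0} with hS
  have hSm : MeasurableSet S := hΩo.measurableSet.diff (measurableSet_singleton _)
  set C1 := 4 * D ^ (1 - γ) with hC1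
  have hC1p : 0 < C1 := by positivity
  set C2 := C1 * c + 2 * R ^ α with hC2
  have hC2p : 0 < C2 := by positivity
  set q := (N : ℝ) + γ with hq
  have hq2 : 2 < q := by linarith
  have hp0 : 0 < q / (q - 2) := div_pos (by linarith) (by linarith)
  refine ⟨(2 * C2) ^ (q / (q - 2)), by positivity, ?_⟩
  intro ω hω t ht
  set K : EuclideanSpace ℝ (Fin N) → EuclideanSpace ℝ (Fin N) → ℝ := fun x y =>
    ‖x‖ ^ α * dist x y ^ (2 - (N : ℝ)) * d y ^ (-γ) * min 1 (d x * d y / dist x y ^ 2) with hK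
  set w : EuclideanSpace ℝ (Fin N) → ℝ := fun x => d x * ‖x‖ ^ (-α) with hw
  have hw0 : ∀ x, 0 ≤ w x := fun x => mul_nonneg (hd0 x) (by positivity)
  have hK0 : ∀ x y, 0 ≤ K x y := fun x y => by
    have := hd0 x
    have := hd0 y
    positivity
  have hKm : Measurable (fun z : EuclideanSpace ℝ (Fin N) × EuclideanSpace ℝ (Fin N) =>
      ENNReal.ofReal (K z.1 z.2)) := by
    simp only [hK]
    fun_prop
  have hwm : Measurable (fun x => ENNReal.ofReal (w x)) := by
    simp only [hw]
    fun_prop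
  set U : EuclideanSpace ℝ (Fin N) → ENNReal := fun x => ∫⁻ y in S, ENNReal.ofReal (K x y) ∂ω with hU
  have hUm : Measurable U := hKm.lintegral_prod_right'
  set E : Set (EuclideanSpace ℝ (Fin N)) := {x | x ∈ S ∧ ENNReal.ofReal t < U x} with hE
  have hEm : MeasurableSet E := hSm.inter (measurableSet_lt measurable_const hUm)
  have hES : E ⊆ S := fun x hx => hx.1
  have hSpos : ∀ x ∈ S, 0 < ‖x‖ := fun x hx => norm_pos_iff.2 (by simpa using hx.2)
  change ∫⁻ x in E, ENNReal.ofReal (w x) ≤ _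
  set A := ∫⁻ x in E, ENNReal.ofReal (w x) with hA
  -- finiteness
  have hAfin : A ≠ ⊤ := by
    have : A ≤ ENNReal.ofReal (D * R ^ (N - 2 - α)) * ENNReal.ofReal (c * R ^ 2) := by
      calc A ≤ ∫⁻ x in E, ENNReal.ofReal (D * R ^ (N - 2 - α)) *
              ENNReal.ofReal (dist x 0 ^ (2 - (N:ℝ))) := by
            apply setLIntegral_mono' hEm
            intro x hx
            have hxS := hES hx
            have hx0 := hSpos x hxS
            have hxR := hnR x hxS.1
            rw [← ENNReal.ofReal_mul (by positivity)]
            apply ENNReal.ofReal_le_ofReal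
            rw [dist_zero_right]
            calc w x ≤ D * ‖x‖ ^ (-α) := by
                  simp only [hw]
                  gcongr
                  exact hdD x hxS.1
              _ = D * (‖x‖ ^ (N - 2 - α) * ‖x‖ ^ (2 - (N:ℝ))) := by
                  rw [← Real.rpow_add hx0]; congr 2; ring
              _ ≤ D * (R ^ (N - 2 - α) * ‖x‖ ^ (2 - (N:ℝ))) := by
                  gcongr
                  linarith
              _ = _ := by ring
        _ ≤ ∫⁻ x in ball 0 R, ENNReal.ofReal (D * R ^ (N - 2 - α)) *
              ENNReal.ofReal (dist x 0 ^ (2 - (N:ℝ))) :=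
            lintegral_mono_set (fun x hx => hΩR (hES hx).1)
        _ = ENNReal.ofReal (D * R ^ (N - 2 - α)) *
              ∫⁻ x in ball 0 R, ENNReal.ofReal (dist x 0 ^ (2 - (N:ℝ))) :=
            lintegral_const_mul' _ _ ENNReal.ofReal_ne_top
        _ ≤ _ := by
            gcongr
            exact hball 0 R hR
    exact ne_top_of_le_ne_top (ENNReal.mul_ne_top ENNReal.ofReal_ne_top ENNReal.ofReal_ne_top) this
  set M := ω S with hM
  have hMfin : M ≠ ⊤ := measure_ne_top _ _
  -- inner estimate
  have hinner : ∀ ρ : ℝ, 0 < ρ → ∀ y ∈ S,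
      ∫⁻ x in E, ENNReal.ofReal (K x y) * ENNReal.ofReal (w x) ≤
        ENNReal.ofReal (C2 * (ρ ^ 2 + ρ ^ (2 - q) * A.toReal)) := by
    intro ρ hρ y hy
    calc _ ≤ ∫⁻ x in E, ((ball y ρ).indicator (fun x => ENNReal.ofReal C1 *
              ENNReal.ofReal (dist x y ^ (2 - (N:ℝ)))) x +
            ENNReal.ofReal (2 * R ^ α * ρ ^ (2 - q)) * ENNReal.ofReal (w x)) := by
          apply setLIntegral_mono' hEm
          intro x hx
          have hxS := hES hx
          by_cases h : x ∈ ball y ρ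
          · rw [indicator_of_mem h, ← ENNReal.ofReal_mul (hK0 x y), ← ENNReal.ofReal_mul hC1p.le]
            refine le_trans (ENNReal.ofReal_le_ofReal ?_) le_self_add
            exact aux_pt1 _ _ _ _ _ _ _ _ (hSpos x hxS) (hd0 x) (hd0 y) dist_nonneg (by linarith)
              (hdl x y) (hdD y hy.1) hγ1
          · rw [indicator_of_notMem h, zero_add]
            gcongr
            have := aux_pt2 ‖x‖ (d x) (d y) (dist x y) α γ R (2 - N) ρ (hSpos x hxS) (hd0 x) (hd0 y)
              hρ (by simpa using h) (hnR x hxS.1) hα0.le (by linarith) (hdl x y) hγ0 hγ1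
            rw [hq, ← sub_sub]
            exact this
      _ = (∫⁻ x in E, (ball y ρ).indicator (fun x => ENNReal.ofReal C1 *
              ENNReal.ofReal (dist x y ^ (2 - (N:ℝ)))) x) +
            ENNReal.ofReal (2 * R ^ α * ρ ^ (2 - q)) * A := by
          rw [lintegral_add_right _ (hwm.const_mul _), lintegral_const_mul' _ _ ENNReal.ofReal_ne_top]
      _ ≤ ENNReal.ofReal C1 * ENNReal.ofReal (c * ρ ^ 2) +
            ENNReal.ofReal (2 * R ^ α * ρ ^ (2 - q)) * A := by
          gcongr
          refine (setLIntegral_le_lintegral _ _).trans ?_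
          rw [lintegral_indicator measurableSet_ball,
            lintegral_const_mul' _ _ ENNReal.ofReal_ne_top]
          gcongr
          exact hball y ρ hρ
      _ = ENNReal.ofReal (C1 * (c * ρ ^ 2) + 2 * R ^ α * ρ ^ (2 - q) * A.toReal) := by
          rw [ENNReal.ofReal_add (by positivity) (by positivity), ENNReal.ofReal_mul hC1p.le,
            ENNReal.ofReal_mul (by positivity : 0 ≤ 2 * R ^ α * ρ ^ (2 - q)),
            ENNReal.ofReal_toReal hAfin]
      _ ≤ _ := by
          apply ENNReal.ofReal_le_ofReal
          have h1 : 0 ≤ ρ ^ (2 - q) * A.toReal := by positivity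
          have h2 : 0 < R ^ α := by positivity
          have h3 : 0 ≤ C1 * c * (ρ ^ (2 - q) * A.toReal) := by positivity
          have h4 : 0 ≤ 2 * R ^ α * ρ ^ 2 := by positivity
          rw [hC2]
          nlinarith
  have hmain : ∀ ρ : ℝ, 0 < ρ →
      t * A.toReal ≤ M.toReal * (C2 * (ρ ^ 2 + ρ ^ (2 - q) * A.toReal)) := by
    intro ρ hρ
    have : ENNReal.ofReal t * A ≤ ENNReal.ofReal (C2 * (ρ ^ 2 + ρ ^ (2 - q) * A.toReal)) * M := by
      calc _ = ∫⁻ x in E, ENNReal.ofReal t * ENNReal.ofReal (w x) :=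
            (lintegral_const_mul' _ _ ENNReal.ofReal_ne_top).symm
        _ ≤ ∫⁻ x in E, U x * ENNReal.ofReal (w x) := by
            apply setLIntegral_mono' hEm
            intro x hx
            gcongr
            exact hx.2.le
        _ = ∫⁻ x in E, ∫⁻ y in S, ENNReal.ofReal (K x y) * ENNReal.ofReal (w x) ∂ω := by
            congr 1; ext x
            rw [lintegral_mul_const' _ _ ENNReal.ofReal_ne_top]
        _ = ∫⁻ y in S, (∫⁻ x in E, ENNReal.ofReal (K x y) * ENNReal.ofReal (w x)) ∂ω := by
            rw [lintegral_lintegral_swap]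
            exact (hKm.mul (hwm.comp measurable_fst)).aemeasurable
        _ ≤ ∫⁻ y in S, ENNReal.ofReal (C2 * (ρ ^ 2 + ρ ^ (2 - q) * A.toReal)) ∂ω :=
            setLIntegral_mono' hSm (fun y hy => hinner ρ hρ y hy)
        _ = _ := by rw [setLIntegral_const]
    have h2 := ENNReal.toReal_mono (ENNReal.mul_ne_top ENNReal.ofReal_ne_top hMfin) this
    rw [ENNReal.toReal_mul, ENNReal.toReal_mul, ENNReal.toReal_ofReal ht.le,
      ENNReal.toReal_ofReal (by positivity)] at h2
    linarith
  rcases eq_or_ne A 0 with hA0 | hA0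
  · rw [hA0]; exact zero_le
  have hApos : 0 < A.toReal := ENNReal.toReal_pos hA0 hAfin
  have hfin := aux_alg q A.toReal t M.toReal C2 hq2 hApos ht ENNReal.toReal_nonneg hC2p hmain
  rw [← ENNReal.ofReal_toReal hAfin, ← ENNReal.ofReal_toReal hMfin,
    ENNReal.ofReal_rpow_of_nonneg ENNReal.toReal_nonneg hp0.le,
    ← ENNReal.ofReal_mul (by positivity)]
  exact ENNReal.ofReal_le_ofReal hfin
end

section
/- Let N > 2 be an integer, Ω ⊂ ℝ^N a nonempty bounded open set with 0 ∈ Ω, let 0 ≤ γ ≤ 1, −N+1 < κ < 1 and −2 < θ < 2. Set p̃ = min{ (N+θ)/(N−2), N+κ }. Then there exists C = C(N, Ω, γ, θ, κ) > 0 such that for every finite positive Borel measure ω on Ω ∖ {0} and every λ > 0: ∫_{{x ∈ Ω∖{0} : U(x) > λ}} d(x)|x|^{−(N−2)/2} dx ≤ C λ^{−p̃} ω(Ω∖{0})^{p̃}, where U(x) = ∫_{Ω∖{0}} |x|^{−(N−2)/2} d(y)^{−γ} · | ln( min{1, |x−y|^2/(d(x)d(y))} ) | dω(y). -/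
open MeasureTheory Metric Set

lemma wlk_log_bound (p σ : ℝ) (hp : 1 < p) (hσ : 0 < σ) :
    ∃ c : ℝ, 0 < c ∧ ∀ d e r : ℝ, 0 < d → 0 < e → 0 < r → d ≤ 3 * e → r ^ 2 < d * e →
      |Real.log (min 1 (r ^ 2 / (d * e)))| ^ p ≤ c * (e ^ σ * r ^ (-σ)) := by
  set ε := σ / (2 * p) with hε
  have hp0 : 0 < p := by linarith
  have hε0 : 0 < ε := by positivity
  refine ⟨3 ^ (σ / 2) / ε ^ p, by positivity, ?_⟩
  intro d e r hd he hr hde hlt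
  have hs : r ^ 2 / (d * e) < 1 := by rw [div_lt_one (by positivity)]; exact hlt
  have hs0 : 0 < r ^ 2 / (d * e) := by positivity
  rw [min_eq_right hs.le, abs_of_nonpos (Real.log_nonpos hs0.le hs.le), ← Real.log_inv]
  have h1 : Real.log (r ^ 2 / (d * e))⁻¹ ≤ (3 * (e / r) ^ 2) ^ ε / ε := by
    refine (Real.log_le_rpow_div (by positivity) hε0).trans ?_
    gcongr
    rw [inv_div, div_pow, ← mul_div_assoc]
    refine div_le_div_of_nonneg_right ?_ (by positivity)
    nlinarith
  have h0 : 0 ≤ Real.log (r ^ 2 / (d * e))⁻¹ := by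
    rw [Real.log_inv]; linarith [Real.log_nonpos hs0.le hs.le]
  refine (Real.rpow_le_rpow h0 h1 hp0.le).trans (le_of_eq ?_)
  rw [Real.div_rpow (by positivity) hε0.le, ← Real.rpow_mul (by positivity)]
  have : ε * p = σ / 2 := by rw [hε]; field_simp
  rw [this, Real.mul_rpow (by positivity) (by positivity), ← Real.rpow_natCast (e / r) 2,
    ← Real.rpow_mul (by positivity)]
  have h2 : ((2 : ℕ) : ℝ) * (σ / 2) = σ := by push_cast; ring
  rw [h2, Real.div_rpow he.le hr.le, Real.rpow_neg hr.le]
  field_simp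

lemma wlk_core_bound (a γ p σ δ D : ℝ) (ha : 0 ≤ a) (hγ1 : γ ≤ 1) (hp : 1 < p)
    (hσ : 0 < σ) (hδ : 0 < δ) (hD : 0 < D) :
    ∃ C : ℝ, 0 < C ∧ ∀ n d e r : ℝ, 0 < n → 0 < d → 0 < e → 0 ≤ r → d ≤ e + r →
      δ ≤ e + n + r → e ≤ D →
      (n ^ (-a) * e ^ (-γ) * |Real.log (min 1 (r ^ 2 / (d * e)))|) ^ p * (d * n ^ (-a)) ≤
        C * (n ^ (-(a * (p + 1) + σ)) + r ^ (-(a * (p + 1) + σ)) + r ^ (-(p - 1 + σ))) := by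
  obtain ⟨c, hc, hlog⟩ := wlk_log_bound p σ hp hσ
  have hp0 : 0 < p := by linarith
  set β := a * (p + 1) with hβ
  have hβ0 : 0 ≤ β := by positivity
  set c1 := 3 * c * D ^ ((1 - γ) * p + σ) with hc1
  have hc10 : 0 < c1 := by positivity
  refine ⟨c1 * ((δ / 2) ^ (-β) * (1 / 2) ^ (-(p - 1)) + (δ / 6) ^ (-(p - 1))), by positivity, ?_⟩
  intro n d e r hn hd he hr0 hder hδe heD
  have hz : 0 ≤ c1 * ((δ / 2) ^ (-β) * (1 / 2) ^ (-(p - 1)) + (δ / 6) ^ (-(p - 1))) *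
      (n ^ (-(β + σ)) + r ^ (-(β + σ)) + r ^ (-(p - 1 + σ))) := by positivity
  rcases le_or_gt (d * e) (r ^ 2) with h | h
  · have : 1 ≤ r ^ 2 / (d * e) := by rwa [one_le_div (by positivity)]
    rw [min_eq_left this]
    simpa [Real.zero_rpow hp0.ne'] using hz
  rcases hr0.eq_or_lt with rfl | hr
  · have : min (1 : ℝ) (0 ^ 2 / (d * e)) = 0 := by simp
    rw [this]
    simpa [Real.zero_rpow hp0.ne'] using hz
  have hr2 : r < 2 * e := by nlinarith
  have hd3 : d ≤ 3 * e := by linarith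
  have hL := hlog d e r hd he hr hd3 h
  -- main reduction
  have hmain : (n ^ (-a) * e ^ (-γ) * |Real.log (min 1 (r ^ 2 / (d * e)))|) ^ p * (d * n ^ (-a))
      ≤ c1 * (n ^ (-β) * e ^ (-(p - 1)) * r ^ (-σ)) := by
    rw [Real.mul_rpow (by positivity) (by positivity), Real.mul_rpow (by positivity) (by positivity)]
    have e1 : n ^ (-β) = (n ^ (-a)) ^ p * n ^ (-a) := by
      rw [← Real.rpow_mul hn.le, ← Real.rpow_add hn, hβ]; congr 1; ring
    have e2 : (e ^ (-γ)) ^ p * (e ^ σ * e) ≤ D ^ ((1 - γ) * p + σ) * e ^ (-(p - 1)) := by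
      have : (e ^ (-γ)) ^ p * (e ^ σ * e) = e ^ ((1 - γ) * p + σ) * e ^ (-(p - 1)) := by
        rw [← Real.rpow_mul he.le, ← Real.rpow_add he]
        nth_rewrite 3 [← Real.rpow_one e]
        rw [← Real.rpow_add he, ← Real.rpow_add he]; congr 1; ring
      rw [this]
      have : 0 ≤ (1 - γ) * p := mul_nonneg (by linarith) hp0.le
      gcongr
    calc _ ≤ (n ^ (-a)) ^ p * (e ^ (-γ)) ^ p * (c * (e ^ σ * r ^ (-σ))) * ((3 * e) * n ^ (-a)) := by
          gcongr
      _ = 3 * c * ((e ^ (-γ)) ^ p * (e ^ σ * e)) * (n ^ (-β) * r ^ (-σ)) := by rw [e1]; ring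
      _ ≤ 3 * c * (D ^ ((1 - γ) * p + σ) * e ^ (-(p - 1))) * (n ^ (-β) * r ^ (-σ)) := by gcongr
      _ = _ := by rw [hc1]; ring
  refine hmain.trans ?_
  rw [mul_assoc c1]
  refine mul_le_mul_of_nonneg_left ?_ hc10.le
  rcases le_total (δ / 2) n with hcase | hcase
  · have h1 : n ^ (-β) ≤ (δ / 2) ^ (-β) :=
      Real.rpow_le_rpow_of_nonpos (by positivity) hcase (by linarith)
    have h2 : e ^ (-(p - 1)) ≤ (1 / 2) ^ (-(p - 1)) * r ^ (-(p - 1)) := by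
      rw [← Real.mul_rpow (by norm_num) hr.le]
      exact Real.rpow_le_rpow_of_nonpos (by positivity) (by linarith) (by linarith)
    have h3 : r ^ (-(p - 1 + σ)) = r ^ (-(p - 1)) * r ^ (-σ) := by
      rw [← Real.rpow_add hr]; congr 1; ring
    calc n ^ (-β) * e ^ (-(p - 1)) * r ^ (-σ)
        ≤ (δ / 2) ^ (-β) * ((1 / 2) ^ (-(p - 1)) * r ^ (-(p - 1))) * r ^ (-σ) := by gcongr
      _ = ((δ / 2) ^ (-β) * (1 / 2) ^ (-(p - 1))) * r ^ (-(p - 1 + σ)) := by rw [h3]; ring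
      _ ≤ _ := by
        gcongr
        · exact le_add_of_nonneg_right (by positivity)
        · exact le_add_of_nonneg_left (by positivity)
  · have h2 : e ^ (-(p - 1)) ≤ (δ / 6) ^ (-(p - 1)) :=
      Real.rpow_le_rpow_of_nonpos (by positivity) (by linarith) (by linarith)
    have h3 : n ^ (-β) * r ^ (-σ) ≤ n ^ (-(β + σ)) + r ^ (-(β + σ)) := by
      have en : n ^ (-(β + σ)) = n ^ (-β) * n ^ (-σ) := by
        rw [← Real.rpow_add hn]; congr 1; ring
      have er : r ^ (-(β + σ)) = r ^ (-β) * r ^ (-σ) := by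
        rw [← Real.rpow_add hr]; congr 1; ring
      rcases le_total n r with hnr | hnr
      · have : r ^ (-σ) ≤ n ^ (-σ) := Real.rpow_le_rpow_of_nonpos hn hnr (by linarith)
        calc _ ≤ n ^ (-β) * n ^ (-σ) := by gcongr
          _ ≤ _ := by rw [en]; exact le_add_of_nonneg_right (by positivity)
      · have : n ^ (-β) ≤ r ^ (-β) := Real.rpow_le_rpow_of_nonpos hr hnr (by linarith)
        calc _ ≤ r ^ (-β) * r ^ (-σ) := by gcongr
          _ ≤ _ := by rw [er]; exact le_add_of_nonneg_left (by positivity)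
    calc n ^ (-β) * e ^ (-(p - 1)) * r ^ (-σ)
        = e ^ (-(p - 1)) * (n ^ (-β) * r ^ (-σ)) := by ring
      _ ≤ (δ / 6) ^ (-(p - 1)) * (n ^ (-(β + σ)) + r ^ (-(β + σ))) := by gcongr
      _ ≤ _ := by
        refine mul_le_mul ?_ ?_ (by positivity) (by positivity)
        · exact le_add_of_nonneg_left (by positivity)
        · exact le_add_of_nonneg_right (by positivity)

lemma wlk_riesz (N : ℕ) (hN : 2 < N) (b R : ℝ) (hb : b < N) (S : Set (EuclideanSpace ℝ (Fin N)))
    (hS : MeasurableSet S) (hR : 0 < R) :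
    ∃ M : ℝ, 0 ≤ M ∧ ∀ y : EuclideanSpace ℝ (Fin N), (∀ x ∈ S, dist x y < R) →
      ∫⁻ x in S, ENNReal.ofReal (dist x y ^ (-b)) ≤ ENNReal.ofReal M := by
  have : Nontrivial (EuclideanSpace ℝ (Fin N)) := by
    have : Nonempty (Fin N) := ⟨⟨0, by omega⟩⟩
    infer_instance
  have hint : IntegrableOn (fun x : EuclideanSpace ℝ (Fin N) => ‖x‖ ^ (-b)) (ball 0 R) volume := by
    rw [integrableOn_fun_norm_addHaar volume (f := fun s : ℝ => s ^ (-b))]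
    have h1 : IntegrableOn (fun s : ℝ => s ^ ((N : ℝ) - 1 - b)) (Ioo 0 R) :=
      (intervalIntegral.integrableOn_Ioo_rpow_iff hR).2 (by linarith)
    refine h1.congr_fun ?_ measurableSet_Ioo
    intro s hs
    have hs0 : 0 < s := hs.1
    simp only [finrank_euclideanSpace, Fintype.card_fin, smul_eq_mul]
    rw [← Real.rpow_natCast, ← Real.rpow_add hs0, Nat.cast_sub (by omega)]
    congr 1
    push_cast; ring
  set h : EuclideanSpace ℝ (Fin N) → ENNReal :=
    (ball 0 R).indicator fun z => ENNReal.ofReal (‖z‖ ^ (-b)) with hh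
  have hfin : ∫⁻ z, h z ≠ ⊤ := by
    rw [hh, lintegral_indicator measurableSet_ball]
    have := hint.lintegral_lt_top
    exact this.ne
  refine ⟨(∫⁻ z, h z).toReal, ENNReal.toReal_nonneg, ?_⟩
  intro y hy
  rw [ENNReal.ofReal_toReal hfin, ← lintegral_sub_right_eq_self h y]
  rw [← lintegral_indicator hS]
  refine lintegral_mono fun x => ?_
  by_cases hx : x ∈ S
  · have : x - y ∈ ball (0 : EuclideanSpace ℝ (Fin N)) R := by
      rw [mem_ball_zero_iff, ← dist_eq_norm]; exact hy x hx
    rw [indicator_of_mem hx, hh, indicator_of_mem this, dist_eq_norm]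
  · rw [indicator_of_notMem hx]; simp

set_option maxHeartbeats 2000000 in
/-- Weak Lebesgue estimate for the logarithmic potential
`U(x) = ∫ |x|^{−(N−2)/2} d(y)^{−γ} |ln(min{1, |x−y|²/(d(x)d(y))})| dω(y)`
with respect to the weight `d(x)|x|^{−(N−2)/2}`, with exponent
`p̃ = min{(N+θ)/(N−2), N+κ}`. -/
theorem weak_estimate_log_kernel (N : ℕ) (hN : 2 < N) (Ω : Set (EuclideanSpace ℝ (Fin N)))
    (hΩo : IsOpen Ω) (hΩb : Bornology.IsBounded Ω) (h0 : (0 : EuclideanSpace ℝ (Fin N)) ∈ Ω)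
    (γ κ θ : ℝ) (hγ0 : 0 ≤ γ) (hγ1 : γ ≤ 1)
    (hκl : -(N : ℝ) + 1 < κ) (hκu : κ < 1) (hθl : -2 < θ) (hθu : θ < 2) :
    ∃ C : ℝ, 0 < C ∧ ∀ (ω : Measure (EuclideanSpace ℝ (Fin N))), IsFiniteMeasure ω →
      ∀ t : ℝ, 0 < t →
      (∫⁻ x in {x | x ∈ Ω \ {0} ∧ ENNReal.ofReal t <
          ∫⁻ y in Ω \ {0}, ENNReal.ofReal
            (‖x‖ ^ (-(((N : ℝ) - 2) / 2)) * infDist y (frontier Ω) ^ (-γ) *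
              |Real.log (min 1 (dist x y ^ 2 /
                (infDist x (frontier Ω) * infDist y (frontier Ω))))|) ∂ω},
        ENNReal.ofReal (infDist x (frontier Ω) * ‖x‖ ^ (-(((N : ℝ) - 2) / 2))))
      ≤ ENNReal.ofReal (C * t ^ (-(min (((N : ℝ) + θ) / ((N : ℝ) - 2)) ((N : ℝ) + κ)))) *
          (ω (Ω \ {0})) ^ (min (((N : ℝ) + θ) / ((N : ℝ) - 2)) ((N : ℝ) + κ)) := by
  have hN' : (2 : ℝ) < N := by exact_mod_cast hN
  set p : ℝ := min (((N : ℝ) + θ) / ((N : ℝ) - 2)) ((N : ℝ) + κ) with hp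
  set a : ℝ := ((N : ℝ) - 2) / 2 with ha
  have ha0 : 0 < a := by rw [ha]; linarith
  have hp1 : 1 < p := by
    rw [hp, lt_min_iff]
    refine ⟨?_, by linarith⟩
    rw [one_lt_div (by linarith)]; linarith
  have hpa : a * (p + 1) < N := by
    have h1 : p ≤ ((N : ℝ) + θ) / ((N : ℝ) - 2) := min_le_left _ _
    rw [le_div_iff₀ (by linarith)] at h1
    rw [ha]; linarith
  have hpN : p - 1 < N := by
    have h1 : p ≤ (N : ℝ) + κ := min_le_right _ _
    linarith
  have hp0 : 0 < p := by linarith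
  clear_value p a
  obtain ⟨σ, hσ0, hσ1, hσ2⟩ : ∃ σ : ℝ, 0 < σ ∧ a * (p + 1) + σ < N ∧ p - 1 + σ < N := by
    refine ⟨min ((N : ℝ) - a * (p + 1)) ((N : ℝ) - (p - 1)) / 2, ?_, ?_, ?_⟩
    · have := lt_min (sub_pos.2 hpa) (sub_pos.2 hpN)
      linarith
    · have := min_le_left ((N : ℝ) - a * (p + 1)) ((N : ℝ) - (p - 1))
      linarith
    · have := min_le_right ((N : ℝ) - a * (p + 1)) ((N : ℝ) - (p - 1))
      linarith
  have hnt : Nontrivial (EuclideanSpace ℝ (Fin N)) := by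
    have : Nonempty (Fin N) := ⟨⟨0, by omega⟩⟩
    infer_instance
  have hfr : (frontier Ω).Nonempty := by
    rw [nonempty_frontier_iff]
    refine ⟨⟨0, h0⟩, ?_⟩
    rintro rfl
    exact NormedSpace.unbounded_univ ℝ _ hΩb
  have hdpos : ∀ x ∈ Ω, 0 < infDist x (frontier Ω) := by
    intro x hx
    refine (isClosed_frontier.notMem_iff_infDist_pos hfr).1 ?_
    rw [hΩo.frontier_eq]
    exact fun h => h.2 hx
  obtain ⟨R, hR0, hR⟩ := hΩb.subset_ball_lt 0 0
  obtain ⟨D, hD0, hD⟩ : ∃ D : ℝ, 0 < D ∧ ∀ x ∈ Ω, infDist x (frontier Ω) ≤ D := by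
    refine ⟨infDist 0 (frontier Ω) + R, by linarith [hdpos 0 h0], fun x hx => ?_⟩
    have h1 := infDist_le_infDist_add_dist (s := frontier Ω) (x := x) (y := 0)
    have h2 := mem_ball.1 (hR hx)
    linarith
  obtain ⟨C, hC0, hC⟩ := wlk_core_bound a γ p σ (infDist 0 (frontier Ω)) D ha0.le hγ1 hp1 hσ0
    (hdpos 0 h0) hD0
  have hSm : MeasurableSet (Ω \ {0}) := hΩo.measurableSet.diff (measurableSet_singleton _)
  obtain ⟨M1, hM1, hM1'⟩ := wlk_riesz N hN (a * (p + 1) + σ) (R + R) hσ1 (Ω \ {0}) hSm (by linarith)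
  obtain ⟨M2, hM2, hM2'⟩ := wlk_riesz N hN (p - 1 + σ) (R + R) hσ2 (Ω \ {0}) hSm (by linarith)
  have hdist : ∀ y ∈ Ω, ∀ x ∈ Ω \ {0}, dist x y < R + R := by
    intro y hy x hx
    have h1 := mem_ball.1 (hR hx.1)
    have h2 := mem_ball.1 (hR hy)
    have h3 := dist_triangle_right x y 0
    linarith
  refine ⟨C * (M1 + M1 + M2) + 1, by positivity, ?_⟩
  intro ω hω t ht
  set k : EuclideanSpace ℝ (Fin N) → EuclideanSpace ℝ (Fin N) → ENNReal := fun x y =>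
    ENNReal.ofReal (‖x‖ ^ (-a) * infDist y (frontier Ω) ^ (-γ) *
              |Real.log (min 1 (dist x y ^ 2 /
                (infDist x (frontier Ω) * infDist y (frontier Ω))))|) with hk
  set w : EuclideanSpace ℝ (Fin N) → ENNReal := fun x =>
    ENNReal.ofReal (infDist x (frontier Ω) * ‖x‖ ^ (-a)) with hw
  set ν := ω.restrict (Ω \ {0}) with hν
  have hkm : Measurable (Function.uncurry k) := by
    have hlog : Measurable Real.log := Real.measurable_log
    simp only [hk, Function.uncurry_def]
    fun_prop
  have hwm : Measurable w := by
    simp only [hw]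
    fun_prop
  have hUm : Measurable fun x => ∫⁻ y, k x y ∂ν := hkm.lintegral_prod_right'
  set E := {x | x ∈ Ω \ {0} ∧ ENNReal.ofReal t < ∫⁻ y, k x y ∂ν} with hE
  have hEm : MeasurableSet E := hSm.inter (measurableSet_lt measurable_const hUm)
  have hES : E ⊆ Ω \ {0} := fun x hx => hx.1
  have hEt : ∀ x ∈ E, ENNReal.ofReal t ≤ ∫⁻ y, k x y ∂ν := fun x hx => hx.2.le
  clear_value E
  have hW : ω (Ω \ {0}) = ν univ := by rw [hν, Measure.restrict_apply_univ]
  rw [hW]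
  have hker : ∀ y ∈ Ω \ {0}, ∫⁻ x in Ω \ {0}, k x y ^ p * w x ≤
      ENNReal.ofReal (C * (M1 + M1 + M2)) := by
    intro y hy
    have hpt : ∀ x ∈ Ω \ {0}, k x y ^ p * w x ≤ ENNReal.ofReal C *
        (ENNReal.ofReal (dist x 0 ^ (-(a * (p + 1) + σ))) +
          ENNReal.ofReal (dist x y ^ (-(a * (p + 1) + σ))) +
          ENNReal.ofReal (dist x y ^ (-(p - 1 + σ)))) := by
      intro x hx
      have hdx := hdpos x hx.1
      have hdy := hdpos y hy.1
      have hx0 : x ≠ 0 := by simpa using hx.2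
      rw [← ENNReal.ofReal_add (by positivity) (by positivity),
        ← ENNReal.ofReal_add (by positivity) (by positivity), ← ENNReal.ofReal_mul hC0.le]
      simp only [hk, hw]
      rw [ENNReal.ofReal_rpow_of_nonneg (by positivity) hp0.le,
        ← ENNReal.ofReal_mul (by positivity)]
      refine ENNReal.ofReal_le_ofReal ?_
      rw [dist_zero_right]
      refine hC ‖x‖ _ _ (dist x y) (norm_pos_iff.2 hx0) hdx hdy dist_nonneg
        infDist_le_infDist_add_dist ?_ (hD y hy.1)
      have h1 := infDist_le_infDist_add_dist (s := frontier Ω) (x := 0) (y := y)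
      have h2 := dist_triangle_left 0 y x
      rw [dist_zero_right] at h2
      linarith
    refine (setLIntegral_mono (by fun_prop) hpt).trans ?_
    rw [lintegral_const_mul _ (by fun_prop), lintegral_add_left (by fun_prop),
      lintegral_add_left (by fun_prop), ENNReal.ofReal_mul hC0.le,
      ENNReal.ofReal_add (by positivity) hM2, ENNReal.ofReal_add hM1 hM1]
    gcongr
    · exact hM1' 0 (hdist 0 h0)
    · exact hM1' y (hdist y hy.1)
    · exact hM2' y (hdist y hy.1)
  clear_value k w
  have hUp : ∀ x, (∫⁻ y, k x y ∂ν) ^ p ≤ (ν univ) ^ (p - 1) * ∫⁻ y, k x y ^ p ∂ν := by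
    intro x
    have hpq := Real.HolderConjugate.conjExponent hp1
    have hkx : Measurable (k x) := hkm.of_uncurry_left
    have h1 := ENNReal.lintegral_mul_le_Lp_mul_Lq ν hpq (f := k x) (g := fun _ => 1)
      hkx.aemeasurable aemeasurable_const
    simp only [Pi.mul_apply, mul_one, ENNReal.one_rpow, lintegral_one] at h1
    calc _ ≤ ((∫⁻ y, k x y ^ p ∂ν) ^ (1 / p) * (ν univ) ^ (1 / p.conjExponent)) ^ p :=
          ENNReal.rpow_le_rpow h1 hp0.le
      _ = _ := by
        rw [ENNReal.mul_rpow_of_nonneg _ _ hp0.le, ← ENNReal.rpow_mul, ← ENNReal.rpow_mul,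
          one_div_mul_cancel hp0.ne', ENNReal.rpow_one, mul_comm]
        congr 2
        rw [Real.conjExponent]
        have : p - 1 ≠ 0 := by linarith
        field_simp
  have hkey : ENNReal.ofReal t ^ p * ∫⁻ x in E, w x ≤
      ENNReal.ofReal (C * (M1 + M1 + M2)) * (ν univ) ^ p := by
    calc ENNReal.ofReal t ^ p * ∫⁻ x in E, w x
        = ∫⁻ x in E, ENNReal.ofReal t ^ p * w x := (lintegral_const_mul _ hwm).symm
      _ ≤ ∫⁻ x in E, (∫⁻ y, k x y ∂ν) ^ p * w x := by
        refine setLIntegral_mono ((hUm.pow_const p).mul hwm) fun x hx => ?_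
        gcongr
        exact hEt x hx
      _ ≤ ∫⁻ x in Ω \ {0}, (∫⁻ y, k x y ∂ν) ^ p * w x :=
        lintegral_mono_set hES
      _ ≤ ∫⁻ x in Ω \ {0}, (ν univ) ^ (p - 1) * ∫⁻ y, k x y ^ p * w x ∂ν := by
        refine lintegral_mono fun x => ?_
        have hkx : Measurable (k x) := hkm.of_uncurry_left
        simp only
        rw [lintegral_mul_const _ (hkx.pow_const p), ← mul_assoc]
        gcongr
        exact hUp x
      _ = (ν univ) ^ (p - 1) * ∫⁻ x in Ω \ {0}, ∫⁻ y, k x y ^ p * w x ∂ν := by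
        refine lintegral_const_mul _ ?_
        exact Measurable.lintegral_prod_right' (f := fun z => k z.1 z.2 ^ p * w z.1)
          ((hkm.pow_const p).mul (hwm.comp measurable_fst))
      _ = (ν univ) ^ (p - 1) * ∫⁻ y, (∫⁻ x in Ω \ {0}, k x y ^ p * w x) ∂ν := by
        rw [lintegral_lintegral_swap]
        exact ((hkm.pow_const p).mul (hwm.comp measurable_fst)).aemeasurable
      _ ≤ (ν univ) ^ (p - 1) * ∫⁻ y, ENNReal.ofReal (C * (M1 + M1 + M2)) ∂ν := by
        refine mul_le_mul_right ?_ _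
        rw [hν]
        exact setLIntegral_mono measurable_const hker
      _ = _ := by
        rw [lintegral_const, mul_left_comm]
        congr 1
        nth_rewrite 2 [← ENNReal.rpow_one (ν univ)]
        rw [← ENNReal.rpow_add_of_nonneg _ _ (by linarith) zero_le_one]
        congr 1; ring
  have htp : 0 < t ^ p := by positivity
  calc ∫⁻ x in E, w x
      = ENNReal.ofReal (t ^ (-p)) * (ENNReal.ofReal t ^ p * ∫⁻ x in E, w x) := by
        rw [ENNReal.ofReal_rpow_of_pos ht, ← mul_assoc, ← ENNReal.ofReal_mul (by positivity),
          ← Real.rpow_add ht]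
        simp
    _ ≤ ENNReal.ofReal (t ^ (-p)) * (ENNReal.ofReal (C * (M1 + M1 + M2)) * (ν univ) ^ p) := by
        gcongr
    _ = ENNReal.ofReal (C * (M1 + M1 + M2) * t ^ (-p)) * (ν univ) ^ p := by
        rw [← mul_assoc, ← ENNReal.ofReal_mul (by positivity), mul_comm (t ^ (-p))]
    _ ≤ _ := by
        gcongr
        linarith
end

section
/- Let N > 2 be an integer, Ω ⊂ ℝ^N a nonempty bounded open set with 0 ∈ Ω, let 0 < α < N/2, set D_Ω = 2·sup_{x∈Ω}|x|, and let ρ ∈ [−1,1] ∖ {0}. For λ > 0 let Ã_λ = { x ∈ Ω ∖ {0} : |ρ| · d(x) |x|^{−α} |ln(|x|/D_Ω)| > λ } and m̃_λ = ∫_{Ã_λ} d(x)|x|^{−α} dx. Then there exists C = C(N, Ω, α) > 0 (independent of ρ) such that for every λ > 0: m̃_λ ≤ C · ( λ^{−1} ln(e+λ) )^{(N−α)/α} · ( |ρ| ln(e + |ρ|^{−1}) )^{(N−α)/α}. -/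
open MeasureTheory Metric Set

lemma ball_aux (N : ℕ) (hN : 2 < N) (α : ℝ) (hα : α < (N : ℝ) / 2) :
    ∃ c : ℝ, 0 < c ∧ ∀ r : ℝ, 0 < r →
      (∫⁻ x in ball (0 : EuclideanSpace ℝ (Fin N)) r, ENNReal.ofReal (‖x‖ ^ (-α)))
        ≤ ENNReal.ofReal (c * r ^ ((N : ℝ) - α)) := by
  have hNR : (2 : ℝ) < N := by exact_mod_cast hN
  have : Nonempty (Fin N) := ⟨⟨0, by omega⟩⟩
  have hp : (0 : ℝ) < N - α := by linarith
  have hV : 0 < (volume : Measure (EuclideanSpace ℝ (Fin N))).real (ball 0 1) :=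
    ENNReal.toReal_pos (measure_ball_pos _ _ one_pos).ne' measure_ball_lt_top.ne
  have hmul : ∀ y : ℝ, 0 < y → y ^ (N - 1) * y ^ (-α) = y ^ ((N : ℝ) - α - 1) := by
    intro y hy
    rw [← Real.rpow_natCast, ← Real.rpow_add hy, Nat.cast_sub (by omega)]
    congr 1
    push_cast; ring
  refine ⟨N * (volume : Measure (EuclideanSpace ℝ (Fin N))).real (ball 0 1) * (1 / (N - α)),
    by positivity, ?_⟩
  intro r hr
  have hI : IntegrableOn (fun y : ℝ => y ^ ((N : ℝ) - α - 1)) (Ioo 0 r) := by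
    have := (intervalIntegral.intervalIntegrable_rpow' (a := 0) (b := r)
      (r := (N : ℝ) - α - 1) (by linarith))
    rw [intervalIntegrable_iff_integrableOn_Ioo_of_le hr.le] at this
    exact this
  have hint : IntegrableOn (fun x : EuclideanSpace ℝ (Fin N) => ‖x‖ ^ (-α)) (ball 0 r) := by
    rw [integrableOn_fun_norm_addHaar (volume) (f := fun y : ℝ => y ^ (-α))]
    refine hI.congr_fun ?_ measurableSet_Ioo
    intro y hy
    simp only [finrank_euclideanSpace, Fintype.card_fin, smul_eq_mul]
    exact (hmul y hy.1).symm
  rw [← ofReal_integral_eq_lintegral_ofReal hint (ae_of_all _ fun x => by positivity)]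
  apply ENNReal.ofReal_le_ofReal
  apply le_of_eq
  have h1 : ∫ x in ball (0 : EuclideanSpace ℝ (Fin N)) r, ‖x‖ ^ (-α) =
      ∫ x : EuclideanSpace ℝ (Fin N), (Iio r).indicator (fun y : ℝ => y ^ (-α)) ‖x‖ := by
    rw [← integral_indicator measurableSet_ball]
    congr 1
    ext x
    simp [indicator]
  rw [h1, integral_fun_norm_addHaar]
  have h2 : ∫ y in Ioi (0 : ℝ), y ^ (Module.finrank ℝ (EuclideanSpace ℝ (Fin N)) - 1) •
      (Iio r).indicator (fun y : ℝ => y ^ (-α)) y = ∫ y in Ioo (0 : ℝ) r, y ^ ((N : ℝ) - α - 1) := by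
    rw [← integral_indicator measurableSet_Ioi, ← integral_indicator measurableSet_Ioo]
    congr 1
    ext y
    by_cases h0 : 0 < y <;> by_cases h1 : y < r <;> simp [indicator, h0, h1, hmul]
  rw [h2, ← integral_Ioc_eq_integral_Ioo, ← intervalIntegral.integral_of_le hr.le,
    integral_rpow (Or.inl (by linarith))]
  simp only [finrank_euclideanSpace, Fintype.card_fin, nsmul_eq_mul, smul_eq_mul,
    sub_add_cancel, Real.zero_rpow hp.ne']
  ring

lemma log_aux (A v s : ℝ) (hA : 0 < A) (hv : 1 ≤ v) (hs : 0 < s) (h : s < A * (v * Real.log v)) :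
    s < (A + 1) * v * Real.log (Real.exp 1 + s) := by
  have hL : 1 ≤ Real.log (Real.exp 1 + s) := by
    rw [Real.le_log_iff_exp_le (by positivity)]; linarith
  have hv0 : 0 < v := by linarith
  rcases le_or_gt s v with h1 | h1
  · nlinarith [mul_pos hA hv0, mul_le_mul_of_nonneg_left hL (by positivity : 0 ≤ (A + 1) * v)]
  · have : Real.log v ≤ Real.log (Real.exp 1 + s) :=
      Real.log_le_log hv0 (by linarith [Real.exp_pos 1])
    have := mul_le_mul_of_nonneg_left this (by positivity : 0 ≤ A * v)
    nlinarith [mul_pos hv0 (by linarith : 0 < Real.log (Real.exp 1 + s))]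

lemma log_split (a b : ℝ) (ha : 0 < a) (hb : 0 < b) :
    Real.log (Real.exp 1 + a * b) ≤
      2 * (Real.log (Real.exp 1 + a) * Real.log (Real.exp 1 + b)) := by
  have he : 1 < Real.exp 1 := by simp
  have h1 : 1 ≤ Real.log (Real.exp 1 + a) := by
    rw [Real.le_log_iff_exp_le (by positivity)]; linarith
  have h2 : 1 ≤ Real.log (Real.exp 1 + b) := by
    rw [Real.le_log_iff_exp_le (by positivity)]; linarith
  have h3 : Real.log (Real.exp 1 + a * b) ≤
      Real.log (Real.exp 1 + a) + Real.log (Real.exp 1 + b) := by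
    rw [← Real.log_mul (by positivity) (by positivity)]
    apply Real.log_le_log (by positivity)
    nlinarith [mul_pos (Real.exp_pos 1) ha, mul_pos (Real.exp_pos 1) hb]
  nlinarith

lemma radius_aux (α M D : ℝ) (hα : 0 < α) (hM : 0 < M) (hD : 0 < D) :
    ∃ K : ℝ, 0 < K ∧ ∀ ρ t r d : ℝ, ρ ≠ 0 → 0 < t → 0 < r → r ≤ D → 0 ≤ d → d ≤ M →
      t < |ρ * (d * r ^ (-α) * Real.log (r / D))| →
      r < (K * (t⁻¹ * Real.log (Real.exp 1 + t)) * (|ρ| * Real.log (Real.exp 1 + |ρ|⁻¹))) ^ (1 / α) := by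
  set A := M * D ^ (-α) / α with hA
  have hA0 : 0 < A := by positivity
  refine ⟨2 * D ^ α * (A + 1), by positivity, ?_⟩
  intro ρ t r d hρ ht hr hrD hd hdM h
  have hρ0 : 0 < |ρ| := abs_pos.mpr hρ
  set v := (D / r) ^ α with hv
  have hDr : 1 ≤ D / r := by rwa [le_div_iff₀ hr, one_mul]
  have hv1 : 1 ≤ v := Real.one_le_rpow hDr hα.le
  have hlog : Real.log v = α * Real.log (D / r) := Real.log_rpow (by positivity) _
  have hl0 : 0 ≤ Real.log (D / r) := Real.log_nonneg hDr
  have hlr : |Real.log (r / D)| = Real.log (D / r) := by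
    rw [← inv_div, Real.log_inv, abs_neg, abs_of_nonneg hl0]
  have hrv : r ^ (-α) = D ^ (-α) * v := by
    rw [hv, Real.div_rpow hD.le hr.le, Real.rpow_neg hr.le, Real.rpow_neg hD.le]
    field_simp
  rw [abs_mul, abs_mul, hlr, abs_of_nonneg (by positivity : 0 ≤ d * r ^ (-α))] at h
  have hs : t * |ρ|⁻¹ < A * (v * Real.log v) := by
    rw [← div_eq_mul_inv, div_lt_iff₀ hρ0]
    calc t < |ρ| * (d * r ^ (-α) * Real.log (D / r)) := h
      _ ≤ |ρ| * (M * r ^ (-α) * Real.log (D / r)) := by gcongr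
      _ = A * (v * Real.log v) * |ρ| := by rw [hA, hlog, hrv]; field_simp
  have hs2 := log_aux A v _ hA0 hv1 (by positivity) hs
  have hsp := log_split t |ρ|⁻¹ ht (by positivity)
  have h3 : t * |ρ|⁻¹ < (A + 1) * v *
      (2 * (Real.log (Real.exp 1 + t) * Real.log (Real.exp 1 + |ρ|⁻¹))) :=
    hs2.trans_le (mul_le_mul_of_nonneg_left hsp (by positivity))
  have h4 : v = D ^ α / r ^ α := Real.div_rpow hD.le hr.le _
  have hra : 0 < r ^ α := by positivity
  have h5 : r ^ α < 2 * D ^ α * (A + 1) * (t⁻¹ * Real.log (Real.exp 1 + t)) *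
      (|ρ| * Real.log (Real.exp 1 + |ρ|⁻¹)) := by
    have h6 := mul_lt_mul_of_pos_right h3 (by positivity : 0 < r ^ α * t⁻¹ * |ρ|)
    rw [h4] at h6
    have h7 : t * |ρ|⁻¹ * (r ^ α * t⁻¹ * |ρ|) = r ^ α := by field_simp
    rw [h7] at h6
    refine h6.trans_eq ?_
    generalize Real.log (Real.exp 1 + t) = L1
    generalize Real.log (Real.exp 1 + |ρ|⁻¹) = L2
    field_simp
  calc r = (r ^ α) ^ (1 / α) := by
        rw [← Real.rpow_mul hr.le, mul_one_div_cancel hα.ne', Real.rpow_one]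
    _ < _ := Real.rpow_lt_rpow hra.le h5 (by positivity)

/-- Distribution-function estimate for `x ↦ ρ d(x)|x|^{−α} ln(|x|/D_Ω)` with respect to
the weight `d(x)|x|^{−α}`. -/
theorem weak_estimate_dirac_log (N : ℕ) (hN : 2 < N) (Ω : Set (EuclideanSpace ℝ (Fin N)))
    (hΩo : IsOpen Ω) (hΩb : Bornology.IsBounded Ω) (h0 : (0 : EuclideanSpace ℝ (Fin N)) ∈ Ω)
    (α : ℝ) (hα0 : 0 < α) (hα : α < (N : ℝ) / 2) :
    ∃ C : ℝ, 0 < C ∧ ∀ ρ : ℝ, ρ ∈ Set.Icc (-1 : ℝ) 1 → ρ ≠ 0 → ∀ t : ℝ, 0 < t →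
      (∫⁻ x in {x | x ∈ Ω \ {0} ∧ t <
            |ρ * (infDist x (frontier Ω) * ‖x‖ ^ (-α) *
              Real.log (‖x‖ / (2 * sSup ((fun z => ‖z‖) '' Ω))))|},
        ENNReal.ofReal (infDist x (frontier Ω) * ‖x‖ ^ (-α)))
      ≤ ENNReal.ofReal
          (C * (t⁻¹ * Real.log (Real.exp 1 + t)) ^ (((N : ℝ) - α) / α) *
            (|ρ| * Real.log (Real.exp 1 + |ρ|⁻¹)) ^ (((N : ℝ) - α) / α)) := by
  obtain ⟨c, hc, hball⟩ := ball_aux N hN α hα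
  obtain ⟨B, hB⟩ := hΩb.exists_norm_le
  set R := sSup ((fun z => ‖z‖) '' Ω) with hR
  have hbdd : BddAbove ((fun z : EuclideanSpace ℝ (Fin N) => ‖z‖) '' Ω) :=
    ⟨B, by rintro _ ⟨z, hz, rfl⟩; exact hB z hz⟩
  have hle : ∀ x ∈ Ω, ‖x‖ ≤ R := fun x hx => le_csSup hbdd ⟨x, hx, rfl⟩
  have hR0 : 0 < R := by
    obtain ⟨ε, hε, hsub⟩ := Metric.isOpen_iff.mp hΩo 0 h0
    have : Nontrivial (EuclideanSpace ℝ (Fin N)) := by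
      have : Nonempty (Fin N) := ⟨⟨0, by omega⟩⟩
      infer_instance
    obtain ⟨x, hx⟩ := exists_norm_eq (EuclideanSpace ℝ (Fin N)) (half_pos hε).le
    have := hle x (hsub (by rw [mem_ball_zero_iff]; linarith))
    linarith
  set M := infDist (0 : EuclideanSpace ℝ (Fin N)) (frontier Ω) + R with hM
  have hM0 : 0 < M := by have := infDist_nonneg (x := (0 : EuclideanSpace ℝ (Fin N))) (s := frontier Ω); linarith
  have hdM : ∀ x ∈ Ω, infDist x (frontier Ω) ≤ M := by
    intro x hx
    have h1 := infDist_le_infDist_add_dist (x := x) (y := 0) (s := frontier Ω)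
    rw [dist_zero_right] at h1
    linarith [hle x hx]
  obtain ⟨K, hK, hrad⟩ := radius_aux α M (2 * R) hα0 hM0 (by positivity)
  refine ⟨M * c * K ^ (((N : ℝ) - α) / α), by positivity, ?_⟩
  intro ρ _ hρ t ht
  have hρ0 : 0 < |ρ| := abs_pos.mpr hρ
  have he : 1 < Real.exp 1 := by simp
  have hP : 0 < t⁻¹ * Real.log (Real.exp 1 + t) :=
    mul_pos (by positivity) (Real.log_pos (by linarith))
  have hQ : 0 < |ρ| * Real.log (Real.exp 1 + |ρ|⁻¹) :=
    mul_pos hρ0 (Real.log_pos (by linarith [inv_pos.mpr hρ0]))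
  have hrad' := fun x d => hrad ρ t x d hρ ht
  set P := t⁻¹ * Real.log (Real.exp 1 + t)
  set Q := |ρ| * Real.log (Real.exp 1 + |ρ|⁻¹)
  set S : Set (EuclideanSpace ℝ (Fin N)) := {x | x ∈ Ω \ {0} ∧ t <
            |ρ * (infDist x (frontier Ω) * ‖x‖ ^ (-α) *
              Real.log (‖x‖ / (2 * R)))|} with hS
  have hSm : MeasurableSet S := by
    refine MeasurableSet.inter (hΩo.measurableSet.diff (measurableSet_singleton 0)) ?_
    refine measurableSet_lt (f := fun _ => t) (g := fun x : EuclideanSpace ℝ (Fin N) =>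
      |ρ * (infDist x (frontier Ω) * ‖x‖ ^ (-α) * Real.log (‖x‖ / (2 * R)))|) measurable_const ?_
    have : Measurable fun x : EuclideanSpace ℝ (Fin N) => infDist x (frontier Ω) :=
      measurable_infDist
    fun_prop
  have hSsub : S ⊆ ball 0 ((K * P * Q) ^ (1 / α)) := by
    rintro x ⟨⟨hx, hx0⟩, hxt⟩
    rw [mem_ball_zero_iff]
    exact hrad' _ _ (norm_pos_iff.mpr hx0) (by linarith [hle x hx]) infDist_nonneg (hdM x hx) hxt
  calc ∫⁻ x in S, ENNReal.ofReal (infDist x (frontier Ω) * ‖x‖ ^ (-α))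
      ≤ ∫⁻ x in S, ENNReal.ofReal M * ENNReal.ofReal (‖x‖ ^ (-α)) := by
        apply setLIntegral_mono' hSm
        intro x hx
        rw [← ENNReal.ofReal_mul hM0.le]
        apply ENNReal.ofReal_le_ofReal
        have := hdM x hx.1.1
        gcongr
    _ ≤ ∫⁻ x in ball (0 : EuclideanSpace ℝ (Fin N)) ((K * P * Q) ^ (1 / α)),
          ENNReal.ofReal M * ENNReal.ofReal (‖x‖ ^ (-α)) := lintegral_mono_set hSsub
    _ = ENNReal.ofReal M * ∫⁻ x in ball (0 : EuclideanSpace ℝ (Fin N)) ((K * P * Q) ^ (1 / α)),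
          ENNReal.ofReal (‖x‖ ^ (-α)) := lintegral_const_mul' _ _ ENNReal.ofReal_ne_top
    _ ≤ ENNReal.ofReal M * ENNReal.ofReal (c * ((K * P * Q) ^ (1 / α)) ^ ((N : ℝ) - α)) := by
        gcongr
        exact hball _ (by positivity)
    _ = _ := by
        rw [← ENNReal.ofReal_mul hM0.le, ← Real.rpow_mul (by positivity), one_div_mul_eq_div,
          Real.mul_rpow (by positivity) hQ.le, Real.mul_rpow hK.le hP.le]
        congr 1
        ring
end

section
/- Let N > 2 be an integer, Ω ⊂ ℝ^N a nonempty bounded open set with 0 ∈ Ω, let 0 < α < N/2, set D_Ω = 2·sup_{x∈Ω}|x|, and let ρ ∈ [−1,1] ∖ {0}. Define the measure dτ = d(x)|x|^{−α} dx on Ω ∖ {0} and the function f(x) = ρ · d(x) |x|^{−α} |ln(|x|/D_Ω)|. Then there exists C = C(N, Ω, α) > 0 (independent of ρ) such that for every measurable set A ⊂ Ω ∖ {0} with 0 < τ(A): ∫_A |f(x)| dτ(x) ≤ C |ρ| · τ(A)^{1 − α/(N−α)} · ln( e + τ(A)^{−1} ); that is, f belongs to the logarithmically weighted weak space L̃_w^{(N−α)/α}(Ω∖{0};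 d(x)|x|^{−α}) with norm ≲ |ρ|. -/
open MeasureTheory Metric Set

/-- The weight `d(x)|x|^{−α}`. -/
noncomputable def wgt (N : ℕ) (Ω : Set (EuclideanSpace ℝ (Fin N))) (α : ℝ)
    (x : EuclideanSpace ℝ (Fin N)) : ℝ :=
  infDist x (frontier Ω) * ‖x‖ ^ (-α)

/-- The function `f(x) = ρ d(x)|x|^{−α} |ln(|x|/D_Ω)|`. -/
noncomputable def logFun (N : ℕ) (Ω : Set (EuclideanSpace ℝ (Fin N))) (α ρ : ℝ)
    (x : EuclideanSpace ℝ (Fin N)) : ℝ :=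
  ρ * (infDist x (frontier Ω) * ‖x‖ ^ (-α) *
    |Real.log (‖x‖ / (2 * sSup ((fun z => ‖z‖) '' Ω)))|)

lemma radial_bound (N : ℕ) (hN : 2 < N) (β : ℝ) (hβ : β < N) :
    ∃ K : ℝ, 0 < K ∧ ∀ r : ℝ, 0 < r →
      (∫⁻ x in ball (0 : EuclideanSpace ℝ (Fin N)) r, ENNReal.ofReal (‖x‖ ^ (-β)))
        ≤ ENNReal.ofReal (K * r ^ ((N : ℝ) - β)) := by
  have hint : ∀ r : ℝ, IntegrableOn (fun x : EuclideanSpace ℝ (Fin N) => ‖x‖ ^ (-β))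
      (ball 0 r) volume := by
    intro r
    refine integrableOn_ball_of_norm_le_rpow (C := 1) (α := β) ?_ ?_ ?_ ?_
    · simp; omega
    · simpa using hβ
    · refine Filter.Eventually.of_forall fun x => ?_
      rw [Real.norm_of_nonneg (by positivity), one_mul]
    · exact (measurable_norm.pow_const _).aestronglyMeasurable
  set I := ∫ x in ball (0 : EuclideanSpace ℝ (Fin N)) 1, ‖x‖ ^ (-β) with hI
  have hI0 : 0 ≤ I := integral_nonneg fun x => by positivity
  refine ⟨I + 1, by linarith, fun r hr => ?_⟩
  rw [← ofReal_integral_eq_lintegral_ofReal (hint r)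
    (Filter.Eventually.of_forall fun x => by positivity)]
  apply ENNReal.ofReal_le_ofReal
  have h := Measure.setIntegral_comp_smul_of_pos (volume : Measure (EuclideanSpace ℝ (Fin N)))
    (fun x => ‖x‖ ^ (-β)) (ball 0 1) hr
  rw [smul_unitBall_of_pos hr] at h
  have h2 : ∀ x : EuclideanSpace ℝ (Fin N), ‖r • x‖ ^ (-β) = r ^ (-β) * ‖x‖ ^ (-β) := by
    intro x
    rw [norm_smul, Real.norm_of_nonneg hr.le, Real.mul_rpow hr.le (norm_nonneg _)]
  simp only [h2, integral_const_mul, finrank_euclideanSpace, Fintype.card_fin, smul_eq_mul] at h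
  have h3 : ∫ x in ball (0 : EuclideanSpace ℝ (Fin N)) r, ‖x‖ ^ (-β)
      = r ^ ((N : ℝ) - β) * I := by
    rw [sub_eq_add_neg, Real.rpow_add hr, Real.rpow_natCast, mul_assoc, hI, h]
    field_simp
  rw [h3]
  have : 0 ≤ r ^ ((N : ℝ) - β) := by positivity
  nlinarith

lemma ptwise (α ε ρ d M n r D L : ℝ) (hα : 0 < α) (hε : 0 < ε) (hd : 0 ≤ d) (hdM : d ≤ M)
    (hn : 0 < n) (hr : 0 < r) (hD : 0 < D) (hnD : n ≤ D) (hL : L = Real.log (D / r))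
    (hL0 : 0 ≤ L) :
    |ρ * (d * n ^ (-α) * |Real.log (n / D)|)| * (d * n ^ (-α)) ≤
      |ρ| * (M * r ^ (-α) * L) * (d * n ^ (-α)) +
      (if n < r then |ρ| * (M ^ 2 * L) * n ^ (-(2 * α)) +
        |ρ| * (M ^ 2 / ε * r ^ ε) * n ^ (-(2 * α + ε)) else 0) := by
  have hM : 0 ≤ M := hd.trans hdM
  have hlog : |Real.log (n / D)| = Real.log (D / n) := by
    rw [abs_of_nonpos (Real.log_nonpos (by positivity) ((div_le_one hD).2 hnD)), ← Real.log_inv,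
      inv_div]
  have hlog0 : 0 ≤ Real.log (D / n) := hlog ▸ abs_nonneg _
  have hna : 0 < n ^ (-α) := by positivity
  rw [hlog, abs_mul, abs_of_nonneg (by positivity : 0 ≤ d * n ^ (-α) * Real.log (D / n))]
  split_ifs with h
  · have h1 : Real.log (D / n) ≤ L + (r / n) ^ ε / ε := by
      have : Real.log (D / n) = L + Real.log (r / n) := by
        rw [hL, Real.log_div hD.ne' hn.ne', Real.log_div hD.ne' hr.ne',
          Real.log_div hr.ne' hn.ne']; ring
      rw [this]
      gcongr
      exact Real.log_le_rpow_div (by positivity) hε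
    have h2 : n ^ (-(2 * α)) = n ^ (-α) * n ^ (-α) := by
      rw [← Real.rpow_add hn]; ring_nf
    have h3 : n ^ (-(2 * α + ε)) = n ^ (-α) * n ^ (-α) * (n ^ ε)⁻¹ := by
      rw [← Real.rpow_neg hn.le, ← Real.rpow_add hn, ← Real.rpow_add hn]; ring_nf
    rw [h2, h3]
    rw [Real.div_rpow hr.le hn.le] at h1
    have h4 : 0 ≤ |ρ| * (M * r ^ (-α) * L) * (d * n ^ (-α)) := by positivity
    calc _ = |ρ| * (d * d) * (n ^ (-α) * n ^ (-α)) * Real.log (D / n) := by ring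
      _ ≤ |ρ| * (M * M) * (n ^ (-α) * n ^ (-α)) * (L + r ^ ε / n ^ ε / ε) := by gcongr
      _ = |ρ| * (M ^ 2 * L) * (n ^ (-α) * n ^ (-α)) +
        |ρ| * (M ^ 2 / ε * r ^ ε) * (n ^ (-α) * n ^ (-α) * (n ^ ε)⁻¹) := by field_simp
      _ ≤ _ := by linarith
  · push Not at h
    rw [add_zero]
    have h1 : n ^ (-α) ≤ r ^ (-α) := Real.rpow_le_rpow_of_nonpos hr h (by linarith)
    have h2 : Real.log (D / n) ≤ L := by
      rw [hL]
      apply Real.log_le_log (by positivity)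
      gcongr
    gcongr

/-- `f` belongs to the logarithmically weighted weak space
`L̃_w^{(N−α)/α}(Ω∖{0}; d(x)|x|^{−α})` with norm `≲ |ρ|`. -/
theorem log_weak_space_estimate (N : ℕ) (hN : 2 < N) (Ω : Set (EuclideanSpace ℝ (Fin N)))
    (hΩo : IsOpen Ω) (hΩb : Bornology.IsBounded Ω) (h0 : (0 : EuclideanSpace ℝ (Fin N)) ∈ Ω)
    (α : ℝ) (hα0 : 0 < α) (hα : α < (N : ℝ) / 2) :
    ∃ C : ℝ, 0 < C ∧ ∀ ρ : ℝ, ρ ∈ Set.Icc (-1 : ℝ) 1 → ρ ≠ 0 →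
      ∀ A : Set (EuclideanSpace ℝ (Fin N)), MeasurableSet A → A ⊆ Ω \ {0} →
        0 < (∫⁻ x in A, ENNReal.ofReal (wgt N Ω α x)) →
      (∫⁻ x in A, ENNReal.ofReal (|logFun N Ω α ρ x| * wgt N Ω α x))
        ≤ ENNReal.ofReal (C * |ρ|) *
          (∫⁻ x in A, ENNReal.ofReal (wgt N Ω α x)) ^ (1 - α / ((N : ℝ) - α)) *
          ENNReal.ofReal (Real.log (Real.exp 1 +
            ((∫⁻ x in A, ENNReal.ofReal (wgt N Ω α x))⁻¹).toReal)) := by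
  have hN0 : (0 : ℝ) < N := by positivity
  set R := sSup ((fun z : EuclideanSpace ℝ (Fin N) => ‖z‖) '' Ω) with hR
  have hbdd : BddAbove ((fun z : EuclideanSpace ℝ (Fin N) => ‖z‖) '' Ω) := by
    obtain ⟨B, hB⟩ := hΩb.exists_norm_le
    exact ⟨B, by rintro _ ⟨x, hx, rfl⟩; exact hB x hx⟩
  have hle : ∀ x ∈ Ω, ‖x‖ ≤ R := fun x hx => le_csSup hbdd ⟨x, hx, rfl⟩
  have hR0 : 0 < R := by
    have : Nonempty (Fin N) := ⟨⟨0, by omega⟩⟩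
    obtain ⟨δ, hδ, hball⟩ := Metric.isOpen_iff.1 hΩo 0 h0
    obtain ⟨v, hv⟩ := exists_norm_eq (EuclideanSpace ℝ (Fin N)) (half_pos hδ).le
    have : ‖v‖ ≤ R := hle v (hball (by simp [hv, hδ]))
    linarith
  set M := R + infDist (0 : EuclideanSpace ℝ (Fin N)) (frontier Ω) with hM
  have hM0 : 0 < M := by have := infDist_nonneg (x := (0 : EuclideanSpace ℝ (Fin N)))
                            (s := frontier Ω); linarith
  have hdM : ∀ x ∈ Ω, infDist x (frontier Ω) ≤ M := by
    intro x hx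
    have h1 := infDist_le_infDist_add_dist (s := frontier Ω) (x := x) (y := 0)
    rw [dist_zero_right] at h1
    have := hle x hx
    linarith
  set ε := ((N : ℝ) - 2 * α) / 2 with hε
  have hε0 : 0 < ε := by rw [hε]; linarith
  obtain ⟨K0, hK0, hK0'⟩ := radial_bound N hN α (by linarith)
  obtain ⟨K1, hK1, hK1'⟩ := radial_bound N hN (2 * α) (by linarith)
  obtain ⟨K2, hK2, hK2'⟩ := radial_bound N hN (2 * α + ε) (by rw [hε]; linarith)
  have hq : 0 < (N : ℝ) - α := by linarith
  set T := M * (K0 * (2 * R) ^ ((N : ℝ) - α)) with hT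
  have hT0 : 0 < T := by positivity
  set c := R / T ^ (1 / ((N : ℝ) - α)) with hc
  have hc0 : 0 < c := by positivity
  set C0 := Real.log 2 + 1 / ((N : ℝ) - α) * (|Real.log T| + 1) with hC0
  have hC00 : 0 < C0 := by
    have := Real.log_pos one_lt_two
    positivity
  refine ⟨M * c ^ (-α) * C0 + M ^ 2 * C0 * K1 * c ^ ((N : ℝ) - 2 * α)
    + M ^ 2 / ε * K2 * c ^ ((N : ℝ) - 2 * α), by positivity, ?_⟩
  intro ρ _ _ A hA hAΩ hpos
  set t := ∫⁻ x in A, ENNReal.ofReal (wgt N Ω α x) with ht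
  have htT : t ≤ ENNReal.ofReal T := by
    calc t ≤ ∫⁻ x in A, ENNReal.ofReal M * ENNReal.ofReal (‖x‖ ^ (-α)) := by
          apply setLIntegral_mono' hA
          intro x hx
          rw [← ENNReal.ofReal_mul hM0.le]
          apply ENNReal.ofReal_le_ofReal
          unfold wgt
          gcongr
          exact hdM x (hAΩ hx).1
      _ ≤ ∫⁻ x in ball (0 : EuclideanSpace ℝ (Fin N)) (2 * R), ENNReal.ofReal M * ENNReal.ofReal (‖x‖ ^ (-α)) := by
          apply lintegral_mono_set
          intro x hx
          have := hle x (hAΩ hx).1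
          rw [mem_ball_zero_iff]; linarith
      _ = ENNReal.ofReal M * ∫⁻ x in ball (0 : EuclideanSpace ℝ (Fin N)) (2 * R),
            ENNReal.ofReal (‖x‖ ^ (-α)) := by
          rw [lintegral_const_mul' _ _ ENNReal.ofReal_ne_top]
      _ ≤ ENNReal.ofReal M * ENNReal.ofReal (K0 * (2 * R) ^ ((N : ℝ) - α)) := by
          gcongr
          exact hK0' _ (by positivity)
      _ = ENNReal.ofReal T := by rw [← ENNReal.ofReal_mul hM0.le]
  have htop : t ≠ ⊤ := ne_top_of_le_ne_top ENNReal.ofReal_ne_top htT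
  set τ := t.toReal with hτ
  have hτ0 : 0 < τ := ENNReal.toReal_pos hpos.ne' htop
  have htτ : t = ENNReal.ofReal τ := (ENNReal.ofReal_toReal htop).symm
  have hτT : τ ≤ T := by
    rw [htτ] at htT
    exact (ENNReal.ofReal_le_ofReal_iff hT0.le).1 htT
  set r := c * τ ^ (1 / ((N : ℝ) - α)) with hr
  have hr0 : 0 < r := by positivity
  set L := Real.log (2 * R / r) with hL
  have hLeq : L = Real.log 2 + 1 / ((N : ℝ) - α) * (Real.log T - Real.log τ) := by
    rw [hL, hr, hc, Real.log_div (by positivity) (by positivity),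
      Real.log_mul (by positivity) (by positivity), Real.log_mul (by positivity) (by positivity),
      Real.log_div (by positivity) (by positivity), Real.log_rpow hT0, Real.log_rpow hτ0]
    ring
  have hL0 : 0 ≤ L := by
    rw [hLeq]
    have h1 := Real.log_pos one_lt_two
    have h2 : 0 ≤ Real.log T - Real.log τ := sub_nonneg.2 (Real.log_le_log hτ0 hτT)
    positivity
  have hinv : (t⁻¹).toReal = τ⁻¹ := by rw [ENNReal.toReal_inv]
  rw [hinv]
  set L' := Real.log (Real.exp 1 + τ⁻¹) with hL'
  have hL'1 : 1 ≤ L' := by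
    rw [hL', Real.le_log_iff_exp_le (by positivity)]
    have : 0 < τ⁻¹ := by positivity
    linarith
  have hL'2 : -Real.log τ ≤ L' := by
    rw [← Real.log_inv, hL']
    apply Real.log_le_log (by positivity)
    have := Real.exp_pos 1
    linarith
  have hLL : L ≤ C0 * L' := by
    have h1 := Real.log_pos one_lt_two
    have h2 : Real.log T ≤ |Real.log T| * L' :=
      (le_abs_self _).trans (le_mul_of_one_le_right (abs_nonneg _) hL'1)
    have h3 : Real.log 2 ≤ Real.log 2 * L' := le_mul_of_one_le_right h1.le hL'1
    rw [hLeq, hC0]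
    have h4 : 1 / ((N : ℝ) - α) * (Real.log T - Real.log τ) ≤
        1 / ((N : ℝ) - α) * ((|Real.log T| + 1) * L') := by
      gcongr
      linarith
    linarith
  set P := τ ^ (1 - α / ((N : ℝ) - α)) with hP
  have hP0 : 0 < P := by positivity
  have hrP1 : r ^ (-α) * τ = c ^ (-α) * P := by
    rw [hr, Real.mul_rpow hc0.le (by positivity), ← Real.rpow_mul hτ0.le, hP, mul_assoc]
    nth_rewrite 2 [← Real.rpow_one τ]
    rw [← Real.rpow_add hτ0]
    congr 2
    ring
  have hrP2 : r ^ ((N : ℝ) - 2 * α) = c ^ ((N : ℝ) - 2 * α) * P := by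
    rw [hr, Real.mul_rpow hc0.le (by positivity), ← Real.rpow_mul hτ0.le, hP]
    congr 2
    field_simp
    ring
  have hrP3 : r ^ ε * r ^ ((N : ℝ) - (2 * α + ε)) = c ^ ((N : ℝ) - 2 * α) * P := by
    rw [← hrP2, ← Real.rpow_add hr0]
    congr 1
    ring
  have hrhs : ENNReal.ofReal ((M * c ^ (-α) * C0 + M ^ 2 * C0 * K1 * c ^ ((N : ℝ) - 2 * α)
    + M ^ 2 / ε * K2 * c ^ ((N : ℝ) - 2 * α)) * |ρ|) * t ^ (1 - α / ((N : ℝ) - α)) *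
      ENNReal.ofReal L' = ENNReal.ofReal ((M * c ^ (-α) * C0 +
      M ^ 2 * C0 * K1 * c ^ ((N : ℝ) - 2 * α)
      + M ^ 2 / ε * K2 * c ^ ((N : ℝ) - 2 * α)) * |ρ| * P * L') := by
    rw [htτ, ENNReal.ofReal_rpow_of_pos hτ0, ← ENNReal.ofReal_mul (by positivity),
      ← ENNReal.ofReal_mul (by positivity)]
  rw [hrhs]
  set a1 := |ρ| * (M * r ^ (-α) * L) with ha1
  set a2 := |ρ| * (M ^ 2 * L) with ha2
  set a3 := |ρ| * (M ^ 2 / ε * r ^ ε) with ha3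
  have ha10 : 0 ≤ a1 := by positivity
  have ha20 : 0 ≤ a2 := by positivity
  have ha30 : 0 ≤ a3 := by positivity
  have hm : ∀ β : ℝ, Measurable fun x : EuclideanSpace ℝ (Fin N) => ENNReal.ofReal (‖x‖ ^ (-β)) :=
    fun β => (measurable_norm.pow_const _).ennreal_ofReal
  have hmw : Measurable fun x : EuclideanSpace ℝ (Fin N) => ENNReal.ofReal (wgt N Ω α x) := by
    unfold wgt
    exact (measurable_infDist.mul (measurable_norm.pow_const _)).ennreal_ofReal
  calc _ ≤ ∫⁻ x in A, (ENNReal.ofReal a1 * ENNReal.ofReal (wgt N Ω α x) +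
          (ball (0 : EuclideanSpace ℝ (Fin N)) r).indicator (fun x =>
            ENNReal.ofReal a2 * ENNReal.ofReal (‖x‖ ^ (-(2 * α))) +
            ENNReal.ofReal a3 * ENNReal.ofReal (‖x‖ ^ (-(2 * α + ε)))) x) := by
        apply setLIntegral_mono' hA
        intro x hx
        have hxΩ := (hAΩ hx).1
        have hx0 : 0 < ‖x‖ := norm_pos_iff.2 fun h => (hAΩ hx).2 h
        have hp := ptwise α ε ρ (infDist x (frontier Ω)) M ‖x‖ r (2 * R) L hα0 hε0 infDist_nonneg
          (hdM x hxΩ) hx0 hr0 (by positivity) (by linarith [hle x hxΩ]) hL hL0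
        refine (ENNReal.ofReal_le_ofReal hp).trans ?_
        have hw0 : 0 ≤ wgt N Ω α x := mul_nonneg infDist_nonneg (by positivity)
        refine ENNReal.ofReal_add_le.trans ?_
        gcongr
        · rw [← ENNReal.ofReal_mul ha10]; rfl
        · by_cases hxr : ‖x‖ < r
          · rw [indicator_of_mem (mem_ball_zero_iff.2 hxr), if_pos hxr,
              ← ENNReal.ofReal_mul ha20, ← ENNReal.ofReal_mul ha30]
            exact ENNReal.ofReal_add_le
          · rw [if_neg hxr]; simp
    _ = ENNReal.ofReal a1 * t + ∫⁻ x in A, (ball (0 : EuclideanSpace ℝ (Fin N)) r).indicator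
          (fun x => ENNReal.ofReal a2 * ENNReal.ofReal (‖x‖ ^ (-(2 * α))) +
            ENNReal.ofReal a3 * ENNReal.ofReal (‖x‖ ^ (-(2 * α + ε)))) x := by
        rw [lintegral_add_left (hmw.const_mul _), lintegral_const_mul _ hmw]
    _ ≤ ENNReal.ofReal a1 * t + ∫⁻ x, (ball (0 : EuclideanSpace ℝ (Fin N)) r).indicator
          (fun x => ENNReal.ofReal a2 * ENNReal.ofReal (‖x‖ ^ (-(2 * α))) +
            ENNReal.ofReal a3 * ENNReal.ofReal (‖x‖ ^ (-(2 * α + ε)))) x := by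
        gcongr
        exact Measure.restrict_le_self
    _ = ENNReal.ofReal a1 * t + (ENNReal.ofReal a2 *
          (∫⁻ x in ball (0 : EuclideanSpace ℝ (Fin N)) r, ENNReal.ofReal (‖x‖ ^ (-(2 * α)))) +
          ENNReal.ofReal a3 * (∫⁻ x in ball (0 : EuclideanSpace ℝ (Fin N)) r,
            ENNReal.ofReal (‖x‖ ^ (-(2 * α + ε))))) := by
        rw [lintegral_indicator measurableSet_ball, lintegral_add_left ((hm _).const_mul _),
          lintegral_const_mul _ (hm _), lintegral_const_mul _ (hm _)]
    _ ≤ ENNReal.ofReal a1 * ENNReal.ofReal τ + (ENNReal.ofReal a2 *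
          ENNReal.ofReal (K1 * r ^ ((N : ℝ) - 2 * α)) +
          ENNReal.ofReal a3 * ENNReal.ofReal (K2 * r ^ ((N : ℝ) - (2 * α + ε)))) := by
        gcongr
        · exact htτ.le
        · exact hK1' r hr0
        · exact hK2' r hr0
    _ = ENNReal.ofReal (a1 * τ + (a2 * (K1 * r ^ ((N : ℝ) - 2 * α)) +
          a3 * (K2 * r ^ ((N : ℝ) - (2 * α + ε))))) := by
        rw [← ENNReal.ofReal_mul ha10, ← ENNReal.ofReal_mul ha20, ← ENNReal.ofReal_mul ha30,
          ← ENNReal.ofReal_add (by positivity) (by positivity),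
          ← ENNReal.ofReal_add (by positivity) (by positivity)]
    _ ≤ _ := by
        apply ENNReal.ofReal_le_ofReal
        have e1 : a1 * τ = |ρ| * M * (c ^ (-α) * P) * L := by rw [ha1, ← hrP1]; ring
        have e2 : a2 * (K1 * r ^ ((N : ℝ) - 2 * α))
            = |ρ| * M ^ 2 * K1 * (c ^ ((N : ℝ) - 2 * α) * P) * L := by rw [ha2, ← hrP2]; ring
        have e3 : a3 * (K2 * r ^ ((N : ℝ) - (2 * α + ε)))
            = |ρ| * (M ^ 2 / ε) * K2 * (c ^ ((N : ℝ) - 2 * α) * P) * 1 := by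
          rw [ha3, ← hrP3]; ring
        rw [e1, e2, e3]
        calc _ ≤ |ρ| * M * (c ^ (-α) * P) * (C0 * L') +
              (|ρ| * M ^ 2 * K1 * (c ^ ((N : ℝ) - 2 * α) * P) * (C0 * L') +
              |ρ| * (M ^ 2 / ε) * K2 * (c ^ ((N : ℝ) - 2 * α) * P) * L') := by gcongr
          _ = _ := by ring
end

section
/- Let N > 2 be an integer, Ω ⊂ ℝ^N a nonempty bounded open set with 0 ∈ Ω, let 0 < α < N/2, set D_Ω = 2·sup_{x∈Ω}|x|, and let ρ ∈ [−1,1] ∖ {0}. Define dτ = d(x)|x|^{−α} dx on Ω ∖ {0} and f(x) = ρ · d(x)|x|^{−α}|ln(|x|/D_Ω)|. Suppose there exists C₀ > 0 such that for every measurable A ⊂ Ω ∖ {0} with 0 < τ(A): ∫_A |f| dτ ≤ C₀ |ρ| τ(A)^{1−α/(N−α)} ln(e + τ(A)^{−1}). Then there exists C = C(N, Ω, α, C₀) > 0 such that for every λ > 0, the set Ã_λ = { x ∈ Ω∖{0} : |f(x)| > λ } satisfies ∫_{Ã_λ} d(x)|x|^{−α} dx ≤ C ( λ^{−1} ln(e+λ)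 )^{(N−α)/α} ( |ρ| ln(e+|ρ|^{−1}) )^{(N−α)/α}. -/
open MeasureTheory Metric Set

theorem aux_core_s9 (m s γ C₀ : ℝ) (hm : 0 < m) (hs : 0 < s) (hγ : 0 < γ) (hγ1 : γ ≤ 1)
    (hC : 0 < C₀) (h : m ^ γ * s ≤ C₀ * Real.log (Real.exp 1 + m⁻¹)) :
    m ^ γ ≤ max 1 (C₀ / γ) * (s⁻¹ * Real.log (Real.exp 1 + s)) := by
  have he : 0 < Real.exp 1 := Real.exp_pos 1
  have hl : 1 ≤ Real.log (Real.exp 1 + s) := by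
    rw [Real.le_log_iff_exp_le (by positivity)]; linarith
  have hX : 0 < s⁻¹ * Real.log (Real.exp 1 + s) := by positivity
  by_cases hc : m ^ γ ≤ s⁻¹
  · calc m ^ γ ≤ s⁻¹ * 1 := by simpa using hc
      _ ≤ s⁻¹ * Real.log (Real.exp 1 + s) := by gcongr
      _ = 1 * (s⁻¹ * Real.log (Real.exp 1 + s)) := by ring
      _ ≤ _ := by gcongr; exact le_max_left _ _
  · push Not at hc
    have hp : 1 ≤ γ⁻¹ := (one_le_inv₀ hγ).2 hγ1
    have h1 : m⁻¹ ≤ s ^ γ⁻¹ := by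
      have h2 : (m ^ γ)⁻¹ ≤ s := by
        rw [inv_le_comm₀ (by positivity) hs]; exact hc.le
      have h3 := Real.rpow_le_rpow (by positivity) h2 (inv_nonneg.2 hγ.le)
      rwa [Real.inv_rpow (by positivity), Real.rpow_rpow_inv hm.le hγ.ne'] at h3
    have h4 : Real.exp 1 + m⁻¹ ≤ (Real.exp 1 + s) ^ γ⁻¹ := by
      have h5 : Real.exp 1 ≤ Real.exp 1 ^ γ⁻¹ :=
        Real.self_le_rpow_of_one_le (Real.one_le_exp (by norm_num)) hp
      have h8 := Real.add_rpow_le_rpow_add he.le hs.le hp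
      linarith
    have h9 : Real.log (Real.exp 1 + m⁻¹) ≤ γ⁻¹ * Real.log (Real.exp 1 + s) := by
      rw [← Real.log_rpow (by positivity)]
      exact Real.log_le_log (by positivity) h4
    calc m ^ γ = m ^ γ * s * s⁻¹ := by field_simp
      _ ≤ C₀ * (γ⁻¹ * Real.log (Real.exp 1 + s)) * s⁻¹ := by
          exact mul_le_mul_of_nonneg_right
            (h.trans (mul_le_mul_of_nonneg_left h9 hC.le)) (inv_nonneg.2 hs.le)
      _ = C₀ / γ * (s⁻¹ * Real.log (Real.exp 1 + s)) := by ring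
      _ ≤ _ := by gcongr; exact le_max_right _ _

theorem aux_log (t r : ℝ) (ht : 0 < t) (hr : 0 < r) :
    Real.log (Real.exp 1 + t / r) ≤
      2 * (Real.log (Real.exp 1 + t) * Real.log (Real.exp 1 + r⁻¹)) := by
  have he : 1 < Real.exp 1 := Real.one_lt_exp_iff.2 one_pos
  have hri : 0 < r⁻¹ := by positivity
  have h1 : 1 ≤ Real.log (Real.exp 1 + t) := by
    rw [Real.le_log_iff_exp_le (by positivity)]; linarith
  have h2 : 1 ≤ Real.log (Real.exp 1 + r⁻¹) := by
    rw [Real.le_log_iff_exp_le (by positivity)]; linarith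
  have h3 : Real.log (Real.exp 1 + t / r) ≤
      Real.log (Real.exp 1 + t) + Real.log (Real.exp 1 + r⁻¹) := by
    rw [← Real.log_mul (by positivity) (by positivity)]
    apply Real.log_le_log (by positivity)
    rw [div_eq_mul_inv]
    have := mul_pos ht (by linarith : 0 < Real.exp 1)
    have := mul_pos hri (by linarith : 0 < Real.exp 1)
    nlinarith
  nlinarith

theorem aux_comb (m t r γ C₀ : ℝ) (hm : 0 < m) (ht : 0 < t) (hr : 0 < r) (hγ : 0 < γ)
    (hγ1 : γ ≤ 1) (hC : 0 < C₀)
    (h : t * m ≤ C₀ * r * m ^ (1 - γ) * Real.log (Real.exp 1 + m⁻¹)) :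
    m ≤ (2 * max 1 (C₀ / γ)) ^ γ⁻¹ * (t⁻¹ * Real.log (Real.exp 1 + t)) ^ γ⁻¹ *
      (r * Real.log (Real.exp 1 + r⁻¹)) ^ γ⁻¹ := by
  have he : 1 < Real.exp 1 := Real.one_lt_exp_iff.2 one_pos
  have hri : 0 < r⁻¹ := by positivity
  have h1 : 0 ≤ Real.log (Real.exp 1 + t) := Real.log_nonneg (by linarith)
  have h2 : 0 ≤ Real.log (Real.exp 1 + r⁻¹) := Real.log_nonneg (by linarith)
  have hk : m ^ γ * (t / r) ≤ C₀ * Real.log (Real.exp 1 + m⁻¹) := by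
    have e : m = m ^ γ * m ^ (1 - γ) := by
      rw [← Real.rpow_add hm]; simp
    have hp : 0 < r * m ^ (1 - γ) := by positivity
    refine le_of_mul_le_mul_right ?_ hp
    calc m ^ γ * (t / r) * (r * m ^ (1 - γ)) = t * (m ^ γ * m ^ (1 - γ)) := by field_simp
      _ = t * m := by rw [← e]
      _ ≤ _ := h
      _ = _ := by ring
  have h3 := aux_core_s9 m (t / r) γ C₀ hm (by positivity) hγ hγ1 hC hk
  have hM : 0 < max 1 (C₀ / γ) := by positivity
  have h4 : m ^ γ ≤ (2 * max 1 (C₀ / γ)) * (t⁻¹ * Real.log (Real.exp 1 + t)) *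
      (r * Real.log (Real.exp 1 + r⁻¹)) := by
    refine h3.trans ?_
    calc _ ≤ max 1 (C₀ / γ) * ((t / r)⁻¹ *
          (2 * (Real.log (Real.exp 1 + t) * Real.log (Real.exp 1 + r⁻¹)))) := by
            gcongr; exact aux_log t r ht hr
      _ = _ := by rw [inv_div]; ring
  have h5 := Real.rpow_le_rpow (by positivity) h4 (inv_nonneg.2 hγ.le)
  rw [Real.rpow_rpow_inv hm.le hγ.ne', Real.mul_rpow (by positivity) (by positivity),
    Real.mul_rpow (by positivity) (by positivity)] at h5
  exact h5

theorem aux_wgt_meas (N : ℕ) (Ω : Set (EuclideanSpace ℝ (Fin N))) (α : ℝ) :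
    Measurable (wgt N Ω α) := by
  unfold wgt
  exact (continuous_infDist_pt _).measurable.mul (measurable_norm.pow_const _)

theorem aux_log_meas (N : ℕ) (Ω : Set (EuclideanSpace ℝ (Fin N))) (α ρ : ℝ) :
    Measurable (logFun N Ω α ρ) := by
  unfold logFun
  have h1 : Measurable fun x : EuclideanSpace ℝ (Fin N) => infDist x (frontier Ω) :=
    (continuous_infDist_pt _).measurable
  have h2 : Measurable fun x : EuclideanSpace ℝ (Fin N) =>
      Real.log (‖x‖ / (2 * sSup ((fun z => ‖z‖) '' Ω))) :=
    Real.measurable_log.comp (measurable_norm.div_const _)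
  exact ((h1.mul (measurable_norm.pow_const _)).mul h2.abs).const_mul _

theorem aux_fin (N : ℕ) (Ω : Set (EuclideanSpace ℝ (Fin N))) (hb : Bornology.IsBounded Ω)
    (α r : ℝ) (hr : 0 < r) :
    (∫⁻ x in Ω \ ball 0 r, ENNReal.ofReal (wgt N Ω α x)) < ⊤ := by
  obtain ⟨R, hR⟩ := hb.subset_closedBall 0
  have hK : IsCompact (closedBall (0 : EuclideanSpace ℝ (Fin N)) R \ ball 0 r) :=
    (isCompact_closedBall 0 R).diff isOpen_ball
  have hc : ContinuousOn (wgt N Ω α) (closedBall 0 R \ ball 0 r) := by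
    unfold wgt
    refine (continuous_infDist_pt _).continuousOn.mul ?_
    refine continuous_norm.continuousOn.rpow_const ?_
    intro x hx
    left
    have : r ≤ ‖x‖ := by simpa using hx.2
    linarith
  have hi := (hc.integrableOn_compact hK (μ := volume)).mono_set (sdiff_subset_sdiff_left hR)
  exact hi.lintegral_lt_top

/-- If `f` satisfies the logarithmically weighted weak-space estimate with constant
`C₀|ρ|`, then its distribution function with respect to the weight `d(x)|x|^{−α}`
satisfies the corresponding pointwise decay estimate, with a constant depending
only on `N, Ω, α, C₀` (not on `ρ`). -/
theorem log_weak_space_converse (N : ℕ) (hN : 2 < N) (Ω : Set (EuclideanSpace ℝ (Fin N)))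
    (hΩo : IsOpen Ω) (hΩb : Bornology.IsBounded Ω) (h0 : (0 : EuclideanSpace ℝ (Fin N)) ∈ Ω)
    (α : ℝ) (hα0 : 0 < α) (hα : α < (N : ℝ) / 2)
    (C₀ : ℝ) (hC₀ : 0 < C₀) :
    ∃ C : ℝ, 0 < C ∧ ∀ ρ : ℝ, ρ ∈ Set.Icc (-1 : ℝ) 1 → ρ ≠ 0 →
      (∀ A : Set (EuclideanSpace ℝ (Fin N)), MeasurableSet A → A ⊆ Ω \ {0} →
        0 < (∫⁻ x in A, ENNReal.ofReal (wgt N Ω α x)) →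
        (∫⁻ x in A, ENNReal.ofReal (|logFun N Ω α ρ x| * wgt N Ω α x))
          ≤ ENNReal.ofReal (C₀ * |ρ|) *
            (∫⁻ x in A, ENNReal.ofReal (wgt N Ω α x)) ^ (1 - α / ((N : ℝ) - α)) *
            ENNReal.ofReal (Real.log (Real.exp 1 +
              ((∫⁻ x in A, ENNReal.ofReal (wgt N Ω α x))⁻¹).toReal))) →
      ∀ t : ℝ, 0 < t →
      (∫⁻ x in {x | x ∈ Ω \ {0} ∧ t < |logFun N Ω α ρ x|},
        ENNReal.ofReal (wgt N Ω α x))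
      ≤ ENNReal.ofReal
          (C * (t⁻¹ * Real.log (Real.exp 1 + t)) ^ (((N : ℝ) - α) / α) *
            (|ρ| * Real.log (Real.exp 1 + |ρ|⁻¹)) ^ (((N : ℝ) - α) / α)) := by
  have hN' : (2 : ℝ) < N := by exact_mod_cast hN
  have hNα : 0 < (N : ℝ) - α := by linarith
  have hγ : 0 < α / ((N : ℝ) - α) := by positivity
  have hγ1 : α / ((N : ℝ) - α) ≤ 1 := by rw [div_le_one hNα]; linarith
  have hinv : ((N : ℝ) - α) / α = (α / ((N : ℝ) - α))⁻¹ := by rw [inv_div]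
  rw [hinv]
  set γ := α / ((N : ℝ) - α) with hγdef
  refine ⟨(2 * max 1 (C₀ / γ)) ^ γ⁻¹, by positivity, ?_⟩
  intro ρ _ hρ H t ht
  have hr : 0 < |ρ| := abs_pos.2 hρ
  set A : Set (EuclideanSpace ℝ (Fin N)) := {x | x ∈ Ω \ {0} ∧ t < |logFun N Ω α ρ x|} with hA
  have hAm : MeasurableSet A :=
    (hΩo.measurableSet.diff (measurableSet_singleton 0)).inter
      (measurableSet_lt measurable_const (aux_log_meas N Ω α ρ).abs)
  let B : ℕ → Set (EuclideanSpace ℝ (Fin N)) := fun k => A \ ball 0 (1 / ((k : ℝ) + 1))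
  have hBm : ∀ k, MeasurableSet (B k) := fun k => hAm.diff measurableSet_ball
  have hBmono : Monotone B := by
    intro i j hij
    exact sdiff_subset_sdiff_right (ball_subset_ball (Nat.one_div_le_one_div hij))
  have hAB : A = ⋃ k, B k := by
    ext x
    simp only [mem_iUnion]
    constructor
    · intro hx
      have hx0 : 0 < ‖x‖ := norm_pos_iff.2 hx.1.2
      obtain ⟨k, hk⟩ := exists_nat_one_div_lt hx0
      exact ⟨k, hx, by simpa using hk.le⟩
    · rintro ⟨k, hk⟩
      exact hk.1
  rw [hAB, setLIntegral_iUnion_of_directed _ (hBmono.directed_le)]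
  refine iSup_le fun k => ?_
  have hBsub : B k ⊆ Ω \ {0} := fun x hx => hx.1.1
  have hfin : (∫⁻ x in B k, ENNReal.ofReal (wgt N Ω α x)) < ⊤ :=
    lt_of_le_of_lt (lintegral_mono_set
      (show B k ⊆ Ω \ ball 0 (1 / ((k : ℝ) + 1)) from fun x hx => ⟨hx.1.1.1, hx.2⟩))
      (aux_fin N Ω hΩb α (1 / ((k : ℝ) + 1)) (by positivity))
  rcases eq_or_ne (∫⁻ x in B k, ENNReal.ofReal (wgt N Ω α x)) 0 with h00 | h00
  · rw [h00]; exact zero_le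
  have hH := H (B k) (hBm k) hBsub (pos_iff_ne_zero.2 h00)
  have hlow : ENNReal.ofReal t * (∫⁻ x in B k, ENNReal.ofReal (wgt N Ω α x)) ≤
      ∫⁻ x in B k, ENNReal.ofReal (|logFun N Ω α ρ x| * wgt N Ω α x) := by
    rw [← lintegral_const_mul _ (aux_wgt_meas N Ω α).ennreal_ofReal]
    refine setLIntegral_mono' (hBm k) fun x hx => ?_
    rw [← ENNReal.ofReal_mul ht.le]
    apply ENNReal.ofReal_le_ofReal
    have hw : 0 ≤ wgt N Ω α x := mul_nonneg infDist_nonneg (Real.rpow_nonneg (norm_nonneg _) _)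
    exact mul_le_mul_of_nonneg_right hx.1.2.le hw
  have hall := hlow.trans hH
  obtain ⟨m, hm⟩ : ∃ m : ℝ, m = (∫⁻ x in B k, ENNReal.ofReal (wgt N Ω α x)).toReal := ⟨_, rfl⟩
  have hm0 : 0 < m := by rw [hm]; exact ENNReal.toReal_pos h00 hfin.ne
  have hme : (∫⁻ x in B k, ENNReal.ofReal (wgt N Ω α x)) = ENNReal.ofReal m := by
    rw [hm, ENNReal.ofReal_toReal hfin.ne]
  rw [hme] at hall ⊢
  apply ENNReal.ofReal_le_ofReal
  apply aux_comb m t |ρ| γ C₀ hm0 ht hr hγ hγ1 hC₀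
  have hl : 0 ≤ Real.log (Real.exp 1 + m⁻¹) := by
    apply Real.log_nonneg
    have : 1 < Real.exp 1 := Real.one_lt_exp_iff.2 one_pos
    have : 0 < m⁻¹ := by positivity
    linarith
  rw [ENNReal.toReal_inv, ENNReal.toReal_ofReal hm0.le, ENNReal.ofReal_rpow_of_pos hm0,
    ← ENNReal.ofReal_mul ht.le, ← ENNReal.ofReal_mul (by positivity),
    ← ENNReal.ofReal_mul (by positivity), ENNReal.ofReal_le_ofReal_iff (by positivity)] at hall
  exact hall
end

section
/- Let N > 2 be an integer, Ω ⊂ ℝ^N a nonempty bounded open set with 0 ∈ Ω, let 0 < α < (N−2)/2 and 0 ≤ γ ≤ 1, and set q = (N+γ)/(N+γ−2). Then there exists C = C(N, Ω, α, γ) > 0 such that for every finite positive Borel measure ω on Ω ∖ {0} and every λ > 0: ∫_{{x ∈ Ω∖{0} : U(x) > λ}} d(x)|x|^{−α} dx ≤ C λ^{−q} ω(Ω∖{0})^q, where U(x) = ∫_{Ω∖{0}} |x−y|^{2−N} · min{1, d(x)d(y)/|x−y|^2} · ( min{1, |x||y|/|x−y|^2} )^{−α} · |y|^{α} d(y)^{−γ}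 dω(y). -/
open MeasureTheory Metric Set

lemma aux1 {a b r γ : ℝ} (ha : 0 < a) (hb : 0 < b) (hr : 0 < r) (hab : a ≤ b + r)
    (h0 : 0 ≤ γ) (h1 : γ ≤ 1) :
    min 1 (a * b / r ^ 2) * b ^ (-γ) ≤ 4 * (max r a) ^ (-γ) := by
  have hm : 0 < max r a := lt_max_of_lt_left hr
  have hz : 0 < a * b / r ^ 2 := by positivity
  have hmin : 0 < min 1 (a * b / r ^ 2) := lt_min one_pos hz
  have key : min 1 (a * b / r ^ 2) * b ^ (-γ) ≤ (4 * (max r a)⁻¹) ^ γ := by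
    rw [Real.rpow_neg hb.le, ← Real.inv_rpow hb.le]
    rcases le_or_gt a (2 * r) with h | h
    · have e1 : min 1 (a * b / r ^ 2) ≤ (a * b / r ^ 2) ^ γ := by
        calc min 1 (a * b / r ^ 2) = (min 1 (a * b / r ^ 2)) ^ (1:ℝ) := (Real.rpow_one _).symm
          _ ≤ (min 1 (a * b / r ^ 2)) ^ γ :=
            Real.rpow_le_rpow_of_exponent_ge hmin (min_le_left _ _) h1
          _ ≤ _ := Real.rpow_le_rpow hmin.le (min_le_right _ _) h0
      calc _ ≤ (a * b / r ^ 2) ^ γ * (b⁻¹) ^ γ := by gcongr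
        _ = (a * b / r ^ 2 * b⁻¹) ^ γ := (Real.mul_rpow hz.le (by positivity)).symm
        _ ≤ _ := by
          apply Real.rpow_le_rpow (by positivity) _ h0
          have : a * b / r ^ 2 * b⁻¹ = a / r ^ 2 := by field_simp
          rw [this, ← div_eq_mul_inv, div_le_div_iff₀ (by positivity) hm]
          have : max r a ≤ 2 * r := max_le (by linarith) h
          nlinarith
    · calc _ ≤ 1 * (b⁻¹) ^ γ := by gcongr; exact min_le_left _ _
        _ = (b⁻¹) ^ γ := one_mul _
        _ ≤ _ := by
          apply Real.rpow_le_rpow (by positivity) _ h0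
          rw [max_eq_right (by linarith), ← div_eq_mul_inv, inv_eq_one_div,
            div_le_div_iff₀ hb ha]
          linarith
  refine key.trans ?_
  rw [Real.mul_rpow (by norm_num) (by positivity), Real.inv_rpow hm.le, ← Real.rpow_neg hm.le]
  gcongr
  calc (4:ℝ) ^ γ ≤ 4 ^ (1:ℝ) := Real.rpow_le_rpow_of_exponent_le (by norm_num) h1
    _ = 4 := Real.rpow_one _

lemma aux2 {s u r α : ℝ} (hs : 0 < s) (hu : 0 < u) (hr : 0 < r) (h : u ≤ s + r)
    (h0 : 0 ≤ α) :
    (min 1 (s * u / r ^ 2)) ^ (-α) * u ^ α ≤ 2 ^ α * (max s (r ^ 2 / s)) ^ α := by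
  have hm : 0 < max s (r ^ 2 / s) := lt_max_of_lt_left hs
  have hz : 0 < s * u / r ^ 2 := by positivity
  have hmin : 0 < min 1 (s * u / r ^ 2) := lt_min one_pos hz
  rw [Real.rpow_neg hmin.le, ← Real.inv_rpow hmin.le, ← Real.mul_rpow (by positivity) hu.le,
    ← Real.mul_rpow (by norm_num) hm.le]
  apply Real.rpow_le_rpow (by positivity) _ h0
  rw [inv_mul_le_iff₀ hmin]
  have hsm := le_max_left s (r ^ 2 / s)
  have hrm := le_max_right s (r ^ 2 / s)
  rcases min_choice 1 (s * u / r ^ 2) with e | e <;> rw [e]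
  · have : r ≤ max s (r ^ 2 / s) := by
      rcases le_total r s with h | h
      · linarith
      · refine le_trans ?_ hrm
        rw [le_div_iff₀ hs]; nlinarith
    linarith
  · calc u ≤ s * u / r ^ 2 * (2 * (r ^ 2 / s)) := by
          have : s * u / r ^ 2 * (2 * (r ^ 2 / s)) = 2 * u := by field_simp
          linarith
      _ ≤ _ := by gcongr

/-- pointwise bound -/
lemma aux3 {n α γ M δ : ℝ} (hα0 : 0 < α) (hα : α < (n - 2) / 2) (hγ0 : 0 ≤ γ) (hγ1 : γ ≤ 1)
    (hM : 1 ≤ M) (hδ : 0 < δ) :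
    ∃ B : ℝ, 0 < B ∧ ∀ a b s u r : ℝ, 0 < a → 0 < b → 0 < s → 0 < u → 0 < r → a ≤ b + r →
      u ≤ s + r → a ≤ M → s ≤ M → δ ≤ a + s →
      ∃ p, (p = r ∨ p = s) ∧ 0 < p ∧
      r ^ (2 - n) * min 1 (a * b / r ^ 2) * (min 1 (s * u / r ^ 2)) ^ (-α) * (u ^ α * b ^ (-γ))
        ≤ B * p ^ (2 - n - γ) ∧
      a * s ^ (-α) * (r ^ (2 - n) * min 1 (a * b / r ^ 2) * (min 1 (s * u / r ^ 2)) ^ (-α) *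
        (u ^ α * b ^ (-γ))) ≤ B * p ^ (2 - n) := by
  have hM0 : 0 < M := by linarith
  set A : ℝ := 4 * 2 ^ α with hA
  have hA0 : 0 < A := by positivity
  refine ⟨A * (M ^ α + M + (δ / 2) ^ (-γ) * M ^ (α + γ) + (δ / 2) ^ (-γ) * M), by positivity, ?_⟩
  intro a b s u r ha hb hs hu hr hab hus haM hsM hδa
  set K := r ^ (2 - n) * min 1 (a * b / r ^ 2) * (min 1 (s * u / r ^ 2)) ^ (-α) *
        (u ^ α * b ^ (-γ)) with hK
  have hz1 : 0 < min 1 (a * b / r ^ 2) := lt_min one_pos (by positivity)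
  have hz2 : 0 < min 1 (s * u / r ^ 2) := lt_min one_pos (by positivity)
  have hm : 0 < max r a := lt_max_of_lt_left hr
  have hK1 : K ≤ A * (r ^ (2 - n) * (max r a) ^ (-γ) * (max s (r ^ 2 / s)) ^ α) := by
    have e1 := aux1 ha hb hr hab hγ0 hγ1
    have e2 := aux2 hs hu hr hus hα0.le
    calc K = r ^ (2 - n) * ((min 1 (a * b / r ^ 2) * b ^ (-γ)) *
          ((min 1 (s * u / r ^ 2)) ^ (-α) * u ^ α)) := by rw [hK]; ring
      _ ≤ r ^ (2 - n) * ((4 * (max r a) ^ (-γ)) * (2 ^ α * (max s (r ^ 2 / s)) ^ α)) := by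
        gcongr
      _ = _ := by rw [hA]; ring
  have hw : 0 < a * s ^ (-α) := by positivity
  have t1 : 0 < M ^ α := by positivity
  have t3 : 0 < (δ / 2) ^ (-γ) * M ^ (α + γ) := by positivity
  have t4 : 0 < (δ / 2) ^ (-γ) * M := by positivity
  rcases le_or_gt r s with h | h
  · have hmax : max s (r ^ 2 / s) = s := by
      apply max_eq_left
      rw [div_le_iff₀ hs]; nlinarith
    rw [hmax] at hK1
    refine ⟨r, Or.inl rfl, hr, ?_, ?_⟩
    · calc K ≤ A * (r ^ (2 - n) * (max r a) ^ (-γ) * s ^ α) := hK1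
        _ ≤ A * (r ^ (2 - n) * r ^ (-γ) * M ^ α) := by
          gcongr A * (r ^ (2 - n) * ?_ * ?_)
          · exact Real.rpow_le_rpow_of_nonpos hr (le_max_left _ _) (by linarith)
          · exact Real.rpow_le_rpow hs.le hsM hα0.le
        _ = A * M ^ α * r ^ (2 - n - γ) := by
          rw [← Real.rpow_add hr, show 2 - n + -γ = 2 - n - γ by ring]; ring
        _ ≤ _ := by gcongr A * ?_ * _; linarith
    · have hmM : max r a ≤ M := max_le (h.trans hsM) haM
      have e : a * (max r a) ^ (-γ) ≤ M := by
        calc a * (max r a) ^ (-γ) ≤ (max r a) ^ (1:ℝ) * (max r a) ^ (-γ) := by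
              rw [Real.rpow_one]; gcongr; exact le_max_right _ _
          _ = (max r a) ^ (1 - γ) := by rw [← Real.rpow_add hm]; rfl
          _ ≤ M ^ (1 - γ) := Real.rpow_le_rpow hm.le hmM (by linarith)
          _ ≤ M ^ (1:ℝ) := Real.rpow_le_rpow_of_exponent_le hM (by linarith)
          _ = M := Real.rpow_one _
      calc a * s ^ (-α) * K ≤ a * s ^ (-α) * (A * (r ^ (2 - n) * (max r a) ^ (-γ) * s ^ α)) := by
            gcongr
        _ = A * r ^ (2 - n) * (a * (max r a) ^ (-γ)) * (s ^ (-α) * s ^ α) := by ring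
        _ = A * r ^ (2 - n) * (a * (max r a) ^ (-γ)) := by
          rw [← Real.rpow_add hs]; simp
        _ ≤ A * r ^ (2 - n) * M := by gcongr
        _ = A * M * r ^ (2 - n) := by ring
        _ ≤ _ := by gcongr A * ?_ * _; linarith
  · have hmax : max s (r ^ 2 / s) = r ^ 2 / s := by
      apply max_eq_right
      rw [le_div_iff₀ hs]; nlinarith
    rw [hmax] at hK1
    have hmδ : δ / 2 ≤ max r a := by
      have := le_max_left r a
      have := le_max_right r a
      linarith
    have hK2 : K ≤ A * (δ / 2) ^ (-γ) * s ^ (2 - n + α) := by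
      have e1 : r ^ (2 - n) * (r ^ 2 / s) ^ α ≤ s ^ (2 - n + α) := by
        calc r ^ (2 - n) * (r ^ 2 / s) ^ α = r ^ (2 - n + 2 * α) * s ^ (-α) := by
              rw [Real.div_rpow (by positivity) hs.le, Real.rpow_add hr, Real.rpow_mul hr.le,
                Real.rpow_neg hs.le]
              norm_cast
              ring
          _ ≤ s ^ (2 - n + 2 * α) * s ^ (-α) := by
              exact mul_le_mul_of_nonneg_right
                (Real.rpow_le_rpow_of_nonpos hs h.le (by linarith)) (by positivity)
          _ = _ := by rw [← Real.rpow_add hs]; congr 1; ring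
      calc K ≤ A * (r ^ (2 - n) * (max r a) ^ (-γ) * (r ^ 2 / s) ^ α) := hK1
        _ = A * (max r a) ^ (-γ) * (r ^ (2 - n) * (r ^ 2 / s) ^ α) := by ring
        _ ≤ A * (δ / 2) ^ (-γ) * s ^ (2 - n + α) := by
          have e2 : (max r a) ^ (-γ) ≤ (δ / 2) ^ (-γ) :=
            Real.rpow_le_rpow_of_nonpos (by positivity) hmδ (by linarith)
          exact mul_le_mul (mul_le_mul_of_nonneg_left e2 hA0.le) e1 (by positivity)
            (by positivity)
    refine ⟨s, Or.inr rfl, hs, ?_, ?_⟩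
    · calc K ≤ A * (δ / 2) ^ (-γ) * s ^ (2 - n + α) := hK2
        _ = A * (δ / 2) ^ (-γ) * (s ^ (α + γ) * s ^ (2 - n - γ)) := by
          rw [← Real.rpow_add hs]; congr 2; ring
        _ ≤ A * (δ / 2) ^ (-γ) * (M ^ (α + γ) * s ^ (2 - n - γ)) := by gcongr
        _ = A * ((δ / 2) ^ (-γ) * M ^ (α + γ)) * s ^ (2 - n - γ) := by ring
        _ ≤ _ := by gcongr A * ?_ * _; linarith
    · calc a * s ^ (-α) * K ≤ a * s ^ (-α) * (A * (δ / 2) ^ (-γ) * s ^ (2 - n + α)) := by gcongr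
        _ = A * (δ / 2) ^ (-γ) * a * (s ^ (-α) * s ^ (2 - n + α)) := by ring
        _ = A * (δ / 2) ^ (-γ) * a * s ^ (2 - n) := by
          rw [← Real.rpow_add hs]; congr 2; ring
        _ ≤ A * (δ / 2) ^ (-γ) * M * s ^ (2 - n) := by gcongr
        _ = A * ((δ / 2) ^ (-γ) * M) * s ^ (2 - n) := by ring
        _ ≤ _ := by gcongr A * ?_ * _; linarith

/-- radial truncated kernel -/
noncomputable def radF (n ρ : ℝ) (z : ℝ) : ℝ := (Iio ρ).indicator (fun z => z ^ (2 - n)) z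

lemma radF_meas (n ρ : ℝ) : Measurable (radF n ρ) := by
  unfold radF
  exact Measurable.indicator (by fun_prop) measurableSet_Iio

lemma radF_nonneg (n ρ : ℝ) {z : ℝ} (hz : 0 ≤ z) : 0 ≤ radF n ρ z := by
  unfold radF
  by_cases h : z < ρ
  · simp only [indicator, mem_Iio, h, if_true]; positivity
  · simp [indicator, h]

lemma radF_bound {n γ ρ p B w K : ℝ} (hρ : 0 < ρ) (hB : 0 < B) (hw : 0 ≤ w)
    (hn : 2 - n - γ ≤ 0)
    (h1 : K ≤ B * p ^ (2 - n - γ)) (h2 : w * K ≤ B * p ^ (2 - n)) :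
    w * K ≤ B * radF n ρ p + w * (B * ρ ^ (2 - n - γ)) := by
  by_cases h : p < ρ
  · have : radF n ρ p = p ^ (2 - n) := by simp [radF, indicator, h]
    rw [this]
    have : 0 ≤ w * (B * ρ ^ (2 - n - γ)) := by positivity
    linarith
  · have : radF n ρ p = 0 := by simp [radF, indicator, h]
    rw [this, mul_zero, zero_add]
    refine mul_le_mul_of_nonneg_left (h1.trans ?_) hw
    exact mul_le_mul_of_nonneg_left
      (Real.rpow_le_rpow_of_nonpos hρ (not_lt.1 h) hn) hB.le

lemma radF_int (N : ℕ) (hN : 2 < N) : ∃ C0 : ℝ, 0 < C0 ∧ ∀ ρ : ℝ, 0 < ρ →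
    ∫⁻ x : EuclideanSpace ℝ (Fin N), ENNReal.ofReal (radF N ρ ‖x‖) ≤
      ENNReal.ofReal (C0 * ρ ^ 2) := by
  have : Nonempty (Fin N) := ⟨⟨0, by omega⟩⟩
  refine ⟨N * (volume : Measure (EuclideanSpace ℝ (Fin N))).real (ball 0 1), ?_, ?_⟩
  · have : 0 < (volume : Measure (EuclideanSpace ℝ (Fin N))).real (ball 0 1) :=
      ENNReal.toReal_pos (measure_ball_pos _ _ one_pos).ne' measure_ball_lt_top.ne
    have : (0:ℝ) < N := by exact_mod_cast (by omega : 0 < N)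
    positivity
  intro ρ hρ
  have heq : EqOn (fun y : ℝ => y ^ (N - 1) • radF N ρ y)
      ((Iio ρ).indicator (fun y => y)) (Ioi 0) := by
    intro y hy
    have hy : 0 < y := hy
    by_cases h : y < ρ
    · simp only [radF, indicator, mem_Iio, h, if_true, smul_eq_mul]
      rw [← Real.rpow_natCast, ← Real.rpow_add hy, Nat.cast_sub (by omega)]
      convert Real.rpow_one y using 2
      push_cast; ring
    · simp [radF, indicator, h]
  have hint : IntegrableOn ((Iio ρ).indicator (fun y : ℝ => y)) (Ioi 0) := by
    rw [IntegrableOn, integrable_indicator_iff measurableSet_Iio, IntegrableOn,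
      Measure.restrict_restrict measurableSet_Iio]
    exact (continuous_id.integrableOn_Icc (a := 0) (b := ρ)).mono_set
      (fun z hz => ⟨le_of_lt hz.2, le_of_lt hz.1⟩)
  have hi : Integrable (fun x : EuclideanSpace ℝ (Fin N) => radF N ρ ‖x‖) := by
    rw [integrable_fun_norm_addHaar volume (f := radF N ρ), finrank_euclideanSpace_fin]
    exact (integrableOn_congr_fun heq measurableSet_Ioi).2 hint
  rw [← ofReal_integral_eq_lintegral_ofReal hi
    (Filter.Eventually.of_forall fun x => radF_nonneg N ρ (norm_nonneg x))]
  apply ENNReal.ofReal_le_ofReal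
  rw [integral_fun_norm_addHaar volume (radF N ρ), finrank_euclideanSpace_fin,
    setIntegral_congr_fun measurableSet_Ioi heq, setIntegral_indicator measurableSet_Iio,
    nsmul_eq_mul, smul_eq_mul, mul_assoc]
  gcongr
  rw [Ioi_inter_Iio, ← integral_Ioc_eq_integral_Ioo, ← intervalIntegral.integral_of_le hρ.le,
    integral_id]
  nlinarith

theorem weak_estimate_green_subcritical (N : ℕ) (hN : 2 < N)
    (Ω : Set (EuclideanSpace ℝ (Fin N)))
    (hΩo : IsOpen Ω) (hΩb : Bornology.IsBounded Ω) (h0 : (0 : EuclideanSpace ℝ (Fin N)) ∈ Ω)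
    (α γ : ℝ) (hα0 : 0 < α) (hα : α < ((N : ℝ) - 2) / 2) (hγ0 : 0 ≤ γ) (hγ1 : γ ≤ 1) :
    ∃ C : ℝ, 0 < C ∧ ∀ (ω : Measure (EuclideanSpace ℝ (Fin N))), IsFiniteMeasure ω →
      ∀ t : ℝ, 0 < t →
      (∫⁻ x in {x | x ∈ Ω \ {0} ∧ ENNReal.ofReal t <
          ∫⁻ y in Ω \ {0}, ENNReal.ofReal
            (dist x y ^ (2 - (N : ℝ)) *
              min 1 (infDist x (frontier Ω) * infDist y (frontier Ω) / dist x y ^ 2) *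
              (min 1 (‖x‖ * ‖y‖ / dist x y ^ 2)) ^ (-α) *
              (‖y‖ ^ α * infDist y (frontier Ω) ^ (-γ))) ∂ω},
        ENNReal.ofReal (infDist x (frontier Ω) * ‖x‖ ^ (-α)))
      ≤ ENNReal.ofReal (C * t ^ (-(((N : ℝ) + γ) / ((N : ℝ) + γ - 2)))) *
          (ω (Ω \ {0})) ^ (((N : ℝ) + γ) / ((N : ℝ) + γ - 2)) := by
  rcases (frontier Ω).eq_empty_or_nonempty with hfe | hfne
  · refine ⟨1, one_pos, fun ω _ t ht => ?_⟩
    simp [hfe]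
  have hn : (2:ℝ) < N := by exact_mod_cast hN
  have dpos : ∀ x ∈ Ω, 0 < infDist x (frontier Ω) := by
    intro x hx
    refine (isClosed_frontier.notMem_iff_infDist_pos hfne).1 fun h => ?_
    rw [hΩo.frontier_eq] at h
    exact h.2 hx
  obtain ⟨R, hR⟩ := hΩb.exists_norm_le
  set δ := infDist (0 : EuclideanSpace ℝ (Fin N)) (frontier Ω) with hδdef
  have hδ : 0 < δ := dpos 0 h0
  have hR0 : 0 ≤ R := by simpa using hR 0 h0
  obtain ⟨B, hB, hpt⟩ := aux3 (n := N) (M := 1 + R + δ) hα0 hα hγ0 hγ1 (by linarith) hδ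
  obtain ⟨C0, hC0, hrad⟩ := radF_int N hN
  set κ : ℝ := (N : ℝ) + γ - 2 with hκ
  have hκ0 : 0 < κ := by linarith
  set q : ℝ := ((N : ℝ) + γ) / κ with hq
  have hq1 : q = 1 + 2 / κ := by rw [hq]; field_simp; linarith
  have hq0 : 0 < q := by positivity
  refine ⟨2 * C0 * (2 * B) ^ q, by positivity, fun ω hω t ht => ?_⟩
  set W : ℝ := (ω (Ω \ {0})).toReal with hW
  have hWe : ω (Ω \ {0}) = ENNReal.ofReal W := (ENNReal.ofReal_toReal (measure_ne_top _ _)).symm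
  have hΩm : MeasurableSet (Ω \ {0}) := hΩo.measurableSet.diff (measurableSet_singleton _)
  have hWnn : 0 ≤ W := ENNReal.toReal_nonneg
  rcases hWnn.eq_or_lt with hW0 | hWpos
  · have hz : ω (Ω \ {0}) = 0 := by rw [hWe, ← hW0]; simp
    have : ω.restrict (Ω \ {0}) = 0 := Measure.restrict_eq_zero.2 hz
    simp [this]
  set ρ : ℝ := (2 * B * W / t) ^ (1 / κ) with hρdef
  have hρ : 0 < ρ := by positivity
  have hρ1 : B * ρ ^ (2 - (N:ℝ) - γ) * W = t / 2 := by
    rw [hρdef, ← Real.rpow_mul (by positivity),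
      show 1 / κ * (2 - (N:ℝ) - γ) = -1 by
        rw [show 2 - (N:ℝ) - γ = -κ by rw [hκ]; ring]; field_simp, Real.rpow_neg_one]
    field_simp
  set w : EuclideanSpace ℝ (Fin N) → ℝ := fun x => infDist x (frontier Ω) * ‖x‖ ^ (-α) with hw
  set K : EuclideanSpace ℝ (Fin N) → EuclideanSpace ℝ (Fin N) → ℝ := fun x y =>
    dist x y ^ (2 - (N : ℝ)) *
              min 1 (infDist x (frontier Ω) * infDist y (frontier Ω) / dist x y ^ 2) *
              (min 1 (‖x‖ * ‖y‖ / dist x y ^ 2)) ^ (-α) *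
              (‖y‖ ^ α * infDist y (frontier Ω) ^ (-γ)) with hK
  set F : EuclideanSpace ℝ (Fin N) → EuclideanSpace ℝ (Fin N) → ENNReal := fun x y =>
    ENNReal.ofReal (radF N ρ ‖x - y‖) + ENNReal.ofReal (radF N ρ ‖x‖) with hF
  have hw0 : ∀ x, 0 ≤ w x := fun x => mul_nonneg infDist_nonneg (by positivity)
  have hFm : Measurable (Function.uncurry F) := by
    have := radF_meas N ρ
    simp only [hF, Function.uncurry_def]
    fun_prop
  have key : ∀ x ∈ Ω \ {0}, ∀ y ∈ Ω \ {0},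
      ENNReal.ofReal (w x) * ENNReal.ofReal (K x y) ≤ ENNReal.ofReal B * F x y +
        ENNReal.ofReal (w x * (B * ρ ^ (2 - (N:ℝ) - γ))) := by
    intro x hx y hy
    have r1 := radF_nonneg N ρ (norm_nonneg (x - y))
    have r2 := radF_nonneg N ρ (norm_nonneg x)
    have hwx := hw0 x
    simp only [hF]
    rw [← ENNReal.ofReal_add r1 r2, ← ENNReal.ofReal_mul hB.le, ← ENNReal.ofReal_mul hwx,
      ← ENNReal.ofReal_add (by positivity) (by positivity)]
    apply ENNReal.ofReal_le_ofReal
    rcases eq_or_ne x y with rfl | hxy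
    · have : K x x = 0 := by
        simp only [hK, dist_self]
        rw [Real.zero_rpow (by linarith)]; simp
      rw [this, mul_zero]; positivity
    · have hx0 : 0 < ‖x‖ := norm_pos_iff.2 hx.2
      have hy0 : 0 < ‖y‖ := norm_pos_iff.2 hy.2
      have hr : 0 < dist x y := dist_pos.2 hxy
      have hdx : infDist x (frontier Ω) ≤ δ + ‖x‖ := by
        simpa using infDist_le_infDist_add_dist (x := x) (y := 0) (s := frontier Ω)
      have hdx' : δ ≤ infDist x (frontier Ω) + ‖x‖ := by
        simpa using infDist_le_infDist_add_dist (x := 0) (y := x) (s := frontier Ω)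
      have hxR := hR x hx.1
      obtain ⟨p, hp, hp0, h1, h2⟩ := hpt _ _ _ _ _ (dpos x hx.1) (dpos y hy.1) hx0 hy0 hr
        infDist_le_infDist_add_dist
        (by rw [dist_eq_norm, norm_sub_rev]; linarith [norm_sub_norm_le y x])
        (by linarith) (by linarith) hdx'
      refine (radF_bound (w := w x) hρ hB hwx (by linarith) h1 h2).trans ?_
      gcongr
      rcases hp with rfl | rfl
      · rw [dist_eq_norm]; linarith
      · linarith
  -- integrate in y
  have key2 : ∀ x ∈ {x | x ∈ Ω \ {0} ∧ ENNReal.ofReal t <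
      ∫⁻ y in Ω \ {0}, ENNReal.ofReal (K x y) ∂ω},
      ENNReal.ofReal (w x) ≤ ENNReal.ofReal (2 * B / t) * ∫⁻ y in Ω \ {0}, F x y ∂ω := by
    rintro x ⟨hx, hxt⟩
    have hwx := hw0 x
    have hFx : Measurable (F x) := hFm.of_uncurry_left
    have e1 : ENNReal.ofReal (w x) * ENNReal.ofReal t ≤
        ENNReal.ofReal B * (∫⁻ y in Ω \ {0}, F x y ∂ω) + ENNReal.ofReal (w x * (t / 2)) := by
      calc ENNReal.ofReal (w x) * ENNReal.ofReal t
          ≤ ENNReal.ofReal (w x) * ∫⁻ y in Ω \ {0}, ENNReal.ofReal (K x y) ∂ω := by gcongr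
        _ = ∫⁻ y in Ω \ {0}, ENNReal.ofReal (w x) * ENNReal.ofReal (K x y) ∂ω :=
          (lintegral_const_mul' _ _ ENNReal.ofReal_ne_top).symm
        _ ≤ ∫⁻ y in Ω \ {0}, (ENNReal.ofReal B * F x y +
              ENNReal.ofReal (w x * (B * ρ ^ (2 - (N:ℝ) - γ)))) ∂ω :=
          setLIntegral_mono' hΩm (key x hx)
        _ = ENNReal.ofReal B * (∫⁻ y in Ω \ {0}, F x y ∂ω) +
              ENNReal.ofReal (w x * (B * ρ ^ (2 - (N:ℝ) - γ))) * ω (Ω \ {0}) := by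
          rw [lintegral_add_right _ measurable_const, lintegral_const_mul _ hFx, setLIntegral_const]
        _ = _ := by
          rw [hWe, ← ENNReal.ofReal_mul (by positivity), ← hρ1]
          congr 2; ring
    have e2 : ENNReal.ofReal (w x * (t / 2)) ≤ ENNReal.ofReal B * ∫⁻ y in Ω \ {0}, F x y ∂ω := by
      have : ENNReal.ofReal (w x) * ENNReal.ofReal t =
          ENNReal.ofReal (w x * (t / 2)) + ENNReal.ofReal (w x * (t / 2)) := by
        rw [← ENNReal.ofReal_mul hwx, ← ENNReal.ofReal_add (by positivity) (by positivity)]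
        congr 1; ring
      rw [this] at e1
      exact (ENNReal.add_le_add_iff_right ENNReal.ofReal_ne_top).1 e1
    calc ENNReal.ofReal (w x) = ENNReal.ofReal (2 / t) * ENNReal.ofReal (w x * (t / 2)) := by
          rw [← ENNReal.ofReal_mul (by positivity)]; congr 1; field_simp
      _ ≤ ENNReal.ofReal (2 / t) * (ENNReal.ofReal B * ∫⁻ y in Ω \ {0}, F x y ∂ω) := by gcongr
      _ = _ := by
          rw [← mul_assoc, ← ENNReal.ofReal_mul (by positivity)]; congr 2; ring
  have hIm : Measurable (fun x => ∫⁻ y in Ω \ {0}, F x y ∂ω) := hFm.lintegral_prod_right'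
  have hFint : ∀ y, ∫⁻ x, F x y ≤ ENNReal.ofReal (2 * C0 * ρ ^ 2) := by
    intro y
    have hm : Measurable fun x : EuclideanSpace ℝ (Fin N) => ENNReal.ofReal (radF N ρ ‖x‖) := by
      have := radF_meas N ρ
      fun_prop
    simp only [hF]
    rw [lintegral_add_right _ hm,
      lintegral_sub_right_eq_self (fun x => ENNReal.ofReal (radF N ρ ‖x‖)) y]
    refine (add_le_add (hrad ρ hρ) (hrad ρ hρ)).trans ?_
    rw [← ENNReal.ofReal_add (by positivity) (by positivity)]
    apply ENNReal.ofReal_le_ofReal; linarith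
  calc _ ≤ ∫⁻ x in {x | x ∈ Ω \ {0} ∧ ENNReal.ofReal t <
        ∫⁻ y in Ω \ {0}, ENNReal.ofReal (K x y) ∂ω},
        ENNReal.ofReal (2 * B / t) * ∫⁻ y in Ω \ {0}, F x y ∂ω :=
        setLIntegral_mono (hIm.const_mul _) key2
    _ ≤ ∫⁻ x, ENNReal.ofReal (2 * B / t) * ∫⁻ y in Ω \ {0}, F x y ∂ω := setLIntegral_le_lintegral _ _
    _ = ENNReal.ofReal (2 * B / t) * ∫⁻ y in Ω \ {0}, (∫⁻ x, F x y) ∂ω := by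
      rw [lintegral_const_mul _ hIm, lintegral_lintegral_swap hFm.aemeasurable]
    _ ≤ ENNReal.ofReal (2 * B / t) * ∫⁻ y in Ω \ {0}, ENNReal.ofReal (2 * C0 * ρ ^ 2) ∂ω := by
      gcongr with y; exact hFint y
    _ = ENNReal.ofReal (2 * B / t) * (ENNReal.ofReal (2 * C0 * ρ ^ 2) * ENNReal.ofReal W) := by
      rw [setLIntegral_const, hWe]
    _ = _ := by
      rw [hWe, ENNReal.ofReal_rpow_of_pos hWpos, ← ENNReal.ofReal_mul (by positivity),
        ← ENNReal.ofReal_mul (by positivity), ← ENNReal.ofReal_mul (by positivity)]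
      congr 1
      have e : ρ ^ 2 = (2 * B * W / t) ^ (2 / κ) := by
        rw [hρdef, ← Real.rpow_natCast, ← Real.rpow_mul (by positivity)]
        congr 1; push_cast; ring
      have e' : (2 * B) ^ q * t ^ (-q) * W ^ q = (2 * B * W / t) * (2 * B * W / t) ^ (2 / κ) := by
        rw [← Real.rpow_one_add' (by positivity) (by positivity), ← hq1,
          Real.div_rpow (by positivity) ht.le, Real.mul_rpow (by positivity) hWpos.le,
          Real.rpow_neg ht.le]
        ring
      rw [e]
      calc _ = 2 * C0 * ((2 * B * W / t) * (2 * B * W / t) ^ (2 / κ)) := by ring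
        _ = _ := by rw [← e']; ring
end
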